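/- arXiv:math/9808107 — 4 statements merged into one kernel-verified Lean document; each statement's English description precedes it below -/
import Mathlib

section
/- For all positive integers m and n and all elements x_1, …, x_n of a commutative ring, the following identity holds: ∑_{λ ⊆ {m^n}} det((x_i^{λ_j + n − j})_{1≤i,j≤n}) · ∏_{i=1}^n (1 − x_i) · ∏_{1 ≤ i < j ≤ n} (x_i x_j − 1) = det((x_i^{j−1} − x_i^{m+2n−j})_{1≤i,j≤n}), where the sum is over all partitions λ = (λ_1 ≥ λ_2 ≥ ⋯ ≥ λ_n ≥ 0) with at most n parts, each part at most m. (This is Macdonald's identity ∑_{λ ⊆ {m^n}} s_λ(x_1,…,x_n) = det(x_i^{j−1} − x_i^{m+2n−j}) / (∏_i (1−x_i) ∏_{i<j} (x_i x_j − 1)(x_i − x_j)) with the denominators cleared using the bialternant formula for Schur functions.) -/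
/-!
Write `F M x` for the sum of the bialternant numerators over partitions with all parts smaller than
`M`, `D x` for the denominator and `x \ i` for `x` without its `i`-th entry. Removing a full column
from the partition if its last part is nonzero, and expanding along the last column otherwise, gives
`F (M + 1) x = (∏ x) * F M x + ∑ i, ± (∏ (x \ i)) * F (M + 1) (x \ i)`.
Multiplied by `D x`, this is also the recursion of `det (x i ^ j - t i * x i ^ (n - 1 - j))` under
`t ↦ x * t`; with `t i = x i ^ (M + n - 1)` both sides vanish at `M = 0`.

For the determinant, the sum over `i` is the Laplace expansion of the matrix for `x * t` whose
first column is replaced by `w i = (1 - x i) * ∏ k ≠ i, (x i * x k - 1)`. Splitting every row into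
its two monomials reduces the claim to Vandermonde matrices in which the rows outside a set `s` are
reversed. There it holds because some polynomial `g` of degree less than `n` takes the value `w i`
at each `x i` with `i ∈ s`, while its reflection vanishes at the other `x i`: by Cramer's rule only
the constant coefficient of `g` contributes.
-/

open Matrix

section Determinant

variable {R ι : Type*} [CommRing R] [Fintype ι] [DecidableEq ι]

theorem det_of_mul_add_mul (a b : ι → R) (A B : Matrix ι ι R) :
    (of fun i j => a i * A i j + b i * B i j).det =
      ∑ s : Finset ι, (∏ i ∈ s, a i) * (∏ i ∈ sᶜ, b i) * (of (s.piecewise A B)).det := by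
  have hexpand := (detRowAlternating (n := ι) (R := R)).toMultilinearMap.map_add_univ
    (fun i j => a i * A i j) (fun i j => b i * B i j)
  refine hexpand.trans (Finset.sum_congr rfl fun s _ => ?_)
  have hrows : s.piecewise (fun i j => a i * A i j) (fun i j => b i * B i j) =
      of fun i j => s.piecewise a b i * of (s.piecewise A B) i j := by
    ext i j
    by_cases hi : i ∈ s <;> simp [Finset.piecewise, hi]
  have hprod : ∏ i, s.piecewise a b i = (∏ i ∈ s, a i) * ∏ i ∈ sᶜ, b i := by
    rw [Finset.prod_piecewise, Finset.univ_inter, Finset.compl_eq_univ_sdiff]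
  rw [hrows, ← hprod]
  exact det_mul_column _ _

end Determinant

section Interpolation

open Polynomial

variable {R : Type*} [CommRing R]

theorem natDegree_le_of_degree_lt_add_one {f : R[X]} {n : ℕ} (hf : f.degree < (n + 1 : ℕ)) :
    f.natDegree ≤ n :=
  natDegree_le_iff_coeff_eq_zero.2 fun k hk => (degree_lt_iff_coeff_zero f (n + 1)).1 hf k hk

theorem natDegree_X_mul_C_sub_one_le (a : R) : (X * C a - 1 : R[X]).natDegree ≤ 1 := by
  compute_degree

theorem natDegree_prod_X_mul_C_sub_one_le {ι : Type*} (s : Finset ι) (x : ι → R) :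
    (∏ k ∈ s, (X * C (x k) - 1)).natDegree ≤ s.card :=
  (natDegree_prod_le _ _).trans <|
    (Finset.sum_le_card_nsmul _ _ 1 fun k _ => natDegree_X_mul_C_sub_one_le (x k)).trans_eq
      (by simp)

-- The polynomial is `(∏ (X - x k) - ∏ (X * x k - 1)) / (X + 1)`; it is built recursively so that
-- no division is needed.
theorem exists_polynomial_eval_eq_prod_erase {ι : Type*} [DecidableEq ι] (s : Finset ι)
    (x : ι → R) :
    ∃ h : R[X], h.degree < s.card ∧ h.eval 0 = (-1) ^ s.card * (∏ i ∈ s, x i - 1) ∧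
      ∀ i ∈ s, h.eval (x i) = (1 - x i) * ∏ k ∈ s.erase i, (x i * x k - 1) := by
  induction s using Finset.induction with
  | empty => exact ⟨0, by simp⟩
  | insert a s ha ih =>
    obtain ⟨h, hdeg, hzero, heval⟩ := ih
    set q : R[X] := ∏ k ∈ s, (X * C (x k) - 1) with hq
    refine ⟨h * (X - C (x a)) + C (1 - x a) * q, ?_, ?_, ?_⟩
    · rw [Finset.card_insert_of_notMem ha]
      have hfirst : (h * (X - C (x a))).degree < ((s.card + 1 : ℕ) : WithBot ℕ) :=
        calc (h * (X - C (x a))).degree ≤ h.degree + (X - C (x a)).degree := degree_mul_le _ _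
          _ ≤ h.degree + 1 := by gcongr; compute_degree
          _ < (s.card + 1 : ℕ) := WithBot.add_lt_add_right (by simp) hdeg
      have hsecond : (C (1 - x a) * q).degree < ((s.card + 1 : ℕ) : WithBot ℕ) :=
        calc (C (1 - x a) * q).degree ≤ s.card :=
            degree_le_of_natDegree_le <| (natDegree_C_mul_le _ _).trans <|
              natDegree_prod_X_mul_C_sub_one_le s x
          _ < (s.card + 1 : ℕ) := by norm_cast; lia
      exact (degree_add_le _ _).trans_lt (max_lt hfirst hsecond)
    · simp only [eval_add, eval_mul, eval_sub, eval_X, eval_C, hzero, hq, eval_prod, eval_one,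
        zero_mul, zero_sub, Finset.prod_const, Finset.prod_insert ha,
        Finset.card_insert_of_notMem ha]
      ring
    · intro i hi
      have hqi : q.eval (x i) = ∏ k ∈ s, (x i * x k - 1) := by
        simp only [hq, eval_prod, eval_sub, eval_mul, eval_X, eval_C, eval_one]
      obtain rfl | his := Finset.mem_insert.1 hi
      · simp [hqi, ha]
      · have hai : a ≠ i := fun h => ha (h ▸ his)
        rw [Finset.erase_insert_of_ne hai, Finset.prod_insert (by simp [ha])]
        simp only [eval_add, eval_mul, eval_sub, eval_X, eval_C, heval i his, hqi,
          ← Finset.mul_prod_erase s _ his]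
        ring

theorem degree_mul_prod_X_mul_C_sub_one_lt {ι : Type*} {h : R[X]} {m : ℕ} (hh : h.degree < m)
    (s : Finset ι) (x : ι → R) :
    (h * ∏ k ∈ s, (X * C (x k) - 1)).degree < (m + s.card : ℕ) :=
  calc (h * ∏ k ∈ s, (X * C (x k) - 1)).degree
      ≤ h.degree + s.card := (degree_mul_le _ _).trans <| by
        gcongr
        exact degree_le_of_natDegree_le (natDegree_prod_X_mul_C_sub_one_le s x)
    _ < (m + s.card : ℕ) := by
        push_cast
        exact WithBot.add_lt_add_right (by simp) hh

theorem eval_reflect_X_mul_C_sub_one_mul (a : R) {g : R[X]} {n : ℕ} (hg : g.degree < n) :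
    (((X * C a - 1) * g).reflect n).eval a = 0 := by
  cases n with
  | zero => simp [degree_eq_bot.1 (Nat.WithBot.lt_zero_iff.1 hg)]
  | succ n =>
    have hg' : g.natDegree ≤ n := natDegree_le_of_degree_lt_add_one hg
    rw [add_comm, reflect_mul _ _ (natDegree_X_mul_C_sub_one_le a) hg']
    simp [reflect_sub, reflect_one]

theorem eval_reflect_eq_sum {n : ℕ} {f : R[X]} (hf : f.natDegree ≤ n) (a : R) :
    (f.reflect n).eval a = ∑ k : Fin (n + 1), f.coeff k * a ^ (k.rev : ℕ) := by
  have hdeg : (f.reflect n).natDegree < n + 1 := by grind [natDegree_reflect_le]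
  rw [eval_eq_sum_range' hdeg, Finset.sum_range, ← Equiv.sum_comp Fin.revPerm]
  refine Finset.sum_congr rfl fun k _ => ?_
  rw [Fin.revPerm_apply, coeff_reflect, revAt_le (by lia), Fin.val_rev]
  congr 2
  lia

/-- The part of the denominator of Macdonald's identity that involves the variable `x i`. -/
def macdonaldFactor {ι : Type*} [Fintype ι] [DecidableEq ι] (x : ι → R) (i : ι) : R :=
  (1 - x i) * ∏ k ∈ {i}ᶜ, (x i * x k - 1)

theorem exists_polynomial_eval_eq_eval_reflect_eq_zero {ι : Type*} [Fintype ι] [DecidableEq ι]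
    {n : ℕ} (hn : Fintype.card ι = n + 1) (x : ι → R) (s : Finset ι) :
    ∃ g : R[X], g.natDegree ≤ n ∧ g.coeff 0 = (-1) ^ n * (1 - ∏ i ∈ s, x i) ∧
      (∀ i ∈ s, g.eval (x i) = macdonaldFactor x i) ∧
      ∀ i ∉ s, (g.reflect n).eval (x i) = 0 := by
  obtain ⟨h, hdeg, hzero, heval⟩ := exists_polynomial_eval_eq_prod_erase s x
  have hcard : s.card + sᶜ.card = n + 1 := by rw [Finset.card_add_card_compl, hn]
  refine ⟨h * ∏ k ∈ sᶜ, (X * C (x k) - 1), ?_, ?_, fun i hi => ?_, fun i hi => ?_⟩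
  · refine natDegree_le_of_degree_lt_add_one ?_
    rw [← hcard]
    exact degree_mul_prod_X_mul_C_sub_one_lt hdeg sᶜ x
  · have hsign : (-1 : R) ^ s.card * (-1) ^ sᶜ.card = (-1) ^ (n + 1) := by rw [← pow_add, hcard]
    simp only [coeff_zero_eq_eval_zero, eval_mul, hzero, eval_prod, eval_sub, eval_X, eval_C,
      eval_one, zero_mul, zero_sub, Finset.prod_const]
    linear_combination (∏ i ∈ s, x i - 1) * hsign
  · have hsub : s.erase i ⊆ {i}ᶜ := fun k hk => by simpa using Finset.ne_of_mem_erase hk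
    have hsdiff : ({i}ᶜ : Finset ι) \ s.erase i = sᶜ := by grind [Finset.mem_compl]
    rw [macdonaldFactor, eval_mul, heval i hi, ← Finset.prod_sdiff hsub, hsdiff, eval_prod]
    simp only [eval_sub, eval_mul, eval_C, eval_X, eval_one]
    ring
  · rw [← Finset.mul_prod_erase _ _ (Finset.mem_compl.2 hi), mul_left_comm]
    refine eval_reflect_X_mul_C_sub_one_mul _ ?_
    convert degree_mul_prod_X_mul_C_sub_one_lt hdeg (sᶜ.erase i) x
    have hcard_erase := Finset.card_erase_add_one (Finset.mem_compl.2 hi)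
    lia

end Interpolation

section ReflectedVandermonde

variable {R : Type*} [CommRing R] {n : ℕ}

/-- The matrix `x i ^ j - t i * x i ^ (n - 1 - j)`: a Vandermonde matrix minus its mirror image with
rows rescaled by `t`. For `t i = x i ^ (m + n)` it is the numerator of Macdonald's identity. -/
def reflectedVandermonde (t x : Fin n → R) : Matrix (Fin n) (Fin n) R :=
  of fun i j => x i ^ (j : ℕ) - t i * x i ^ (j.rev : ℕ)

/-- The Vandermonde matrix of `x` with the rows outside `s` reversed. -/
def partlyReversedVandermonde (s : Finset (Fin n)) (x : Fin n → R) : Matrix (Fin n) (Fin n) R :=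
  of (s.piecewise (vandermonde x) ((vandermonde x).submatrix id Fin.rev))

theorem det_of_mul_pow_add_mul_pow_rev (a b x : Fin n → R) :
    (of fun i j : Fin n => a i * x i ^ (j : ℕ) + b i * x i ^ (j.rev : ℕ)).det =
      ∑ s : Finset (Fin n), (∏ i ∈ s, a i) * (∏ i ∈ sᶜ, b i) *
        (partlyReversedVandermonde s x).det :=
  det_of_mul_add_mul a b (vandermonde x) ((vandermonde x).submatrix id Fin.rev)

theorem det_updateCol_zero_partlyReversedVandermonde (s : Finset (Fin (n + 1)))
    (x : Fin (n + 1) → R) :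
    ((partlyReversedVandermonde s x).updateCol 0 (s.piecewise (macdonaldFactor x) 0)).det =
      (-1) ^ n * (1 - ∏ i ∈ s, x i) * (partlyReversedVandermonde s x).det := by
  obtain ⟨g, hdeg, hzero, heval, hreflect⟩ :=
    exists_polynomial_eval_eq_eval_reflect_eq_zero (Fintype.card_fin _) x s
  have hcol : s.piecewise (macdonaldFactor x) 0 =
      fun i => ∑ k : Fin (n + 1), g.coeff k • partlyReversedVandermonde s x i k := by
    ext i
    by_cases hi : i ∈ s
    · have h := heval i hi
      rw [Polynomial.eval_eq_sum_range' (Nat.lt_succ_of_le hdeg), Finset.sum_range] at h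
      simpa [partlyReversedVandermonde, Finset.piecewise, hi, vandermonde_apply] using h.symm
    · have h := hreflect i hi
      rw [eval_reflect_eq_sum hdeg] at h
      simpa [partlyReversedVandermonde, Finset.piecewise, hi, vandermonde_apply] using h.symm
  rw [hcol, det_updateCol_sum, smul_eq_mul, Fin.val_zero, hzero]

theorem det_updateCol_zero_reflectedVandermonde (t x : Fin (n + 1) → R) :
    ((reflectedVandermonde t x).updateCol 0 (macdonaldFactor x)).det =
      (-1) ^ n * ((reflectedVandermonde t x).det -
        (of fun i j : Fin (n + 1) => x i ^ ((j : ℕ) + 1) - t i * x i ^ (j.rev : ℕ)).det) := by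
  have hupdate : (reflectedVandermonde t x).updateCol 0 (macdonaldFactor x) =
      of fun i j : Fin (n + 1) => 1 * (vandermonde x).updateCol 0 (macdonaldFactor x) i j +
        -t i * ((vandermonde x).submatrix id Fin.rev).updateCol 0 0 i j := by
    ext i j
    by_cases hj : j = 0
    · simp [hj]
    · simp [hj, reflectedVandermonde, vandermonde_apply, sub_eq_add_neg]
  have hpiecewise (s : Finset (Fin (n + 1))) :
      of (s.piecewise ((vandermonde x).updateCol 0 (macdonaldFactor x))
        (((vandermonde x).submatrix id Fin.rev).updateCol 0 0)) =
      (partlyReversedVandermonde s x).updateCol 0 (s.piecewise (macdonaldFactor x) 0) := by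
    ext i j
    by_cases hi : i ∈ s <;> by_cases hj : j = 0 <;>
      simp [partlyReversedVandermonde, Finset.piecewise, hi, hj]
  have hplain : reflectedVandermonde t x =
      of fun i j : Fin (n + 1) => 1 * x i ^ (j : ℕ) + -t i * x i ^ (j.rev : ℕ) := by
    ext i j; simp [reflectedVandermonde, sub_eq_add_neg]
  have hshift : (of fun i j : Fin (n + 1) => x i ^ ((j : ℕ) + 1) - t i * x i ^ (j.rev : ℕ)) =
      of fun i j : Fin (n + 1) => x i * x i ^ (j : ℕ) + -t i * x i ^ (j.rev : ℕ) := by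
    ext i j; simp [pow_succ', sub_eq_add_neg]
  rw [hupdate, det_of_mul_add_mul (fun _ => 1), hplain, hshift,
    det_of_mul_pow_add_mul_pow_rev (fun _ => 1), det_of_mul_pow_add_mul_pow_rev,
    ← Finset.sum_sub_distrib, Finset.mul_sum]
  refine Finset.sum_congr rfl fun s _ => ?_
  rw [hpiecewise, det_updateCol_zero_partlyReversedVandermonde]
  simp only [Finset.prod_const_one]
  ring

theorem det_reflectedVandermonde_mul (t x : Fin (n + 1) → R) :
    (reflectedVandermonde (x * t) x).det = (∏ i, x i) * (reflectedVandermonde t x).det +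
      ∑ i : Fin (n + 1), (-1) ^ (i + n : ℕ) * macdonaldFactor x i *
        ((∏ k, i.removeNth x k) *
          (reflectedVandermonde (i.removeNth t) (i.removeNth x)).det) := by
  have hscale : (of fun i j : Fin (n + 1) =>
      x i ^ ((j : ℕ) + 1) - (x * t) i * x i ^ (j.rev : ℕ)).det =
      (∏ i, x i) * (reflectedVandermonde t x).det := by
    rw [← det_mul_column]
    congr 1
    ext i j
    simp only [reflectedVandermonde, of_apply, Pi.mul_apply]
    ring
  have hminor (i : Fin (n + 1)) :
      ((reflectedVandermonde (x * t) x).submatrix i.succAbove (Fin.succAbove 0)).det =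
        (∏ k, i.removeNth x k) * (reflectedVandermonde (i.removeNth t) (i.removeNth x)).det := by
    rw [← det_mul_column]
    congr 1
    ext k j
    simp only [reflectedVandermonde, submatrix_apply, of_apply, Pi.mul_apply, Fin.removeNth,
      Fin.succAbove_zero, Fin.rev_succ, Fin.val_succ, Fin.val_castSucc]
    ring
  have hsign : (-1 : R) ^ n * (-1) ^ n = 1 := by rw [← mul_pow]; simp
  have hlaplace := det_updateCol_zero_reflectedVandermonde (x * t) x
  rw [det_succ_column _ 0, hscale] at hlaplace
  simp only [updateCol_self, submatrix_updateCol_succAbove, hminor, Fin.val_zero,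
    add_zero] at hlaplace
  simp only [pow_add, mul_comm _ ((-1 : R) ^ n), mul_assoc, ← Finset.mul_sum] at hlaplace ⊢
  rw [hlaplace]
  linear_combination (-((reflectedVandermonde (x * t) x).det -
    (∏ i, x i) * (reflectedVandermonde t x).det)) * hsign

end ReflectedVandermonde

section Partitions

/-- The partitions with at most `n` parts, all smaller than `M`, as antitone functions of a
0-indexed position. -/
def boxPartitions (n M : ℕ) : Finset (Fin n → Fin M) :=
  {l | ∀ i j : Fin n, i ≤ j → (l j : ℕ) ≤ (l i : ℕ)}

theorem mem_boxPartitions {n M : ℕ} {l : Fin n → Fin M} : l ∈ boxPartitions n M ↔ Antitone l := by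
  simp [boxPartitions, Antitone]

theorem boxPartitions_filter_last_ne_zero (n M : ℕ) :
    {l ∈ boxPartitions (n + 1) (M + 1) | l (Fin.last n) ≠ 0} =
      (boxPartitions (n + 1) M).map (Fin.succEmb M).arrowCongrRight := by
  ext l
  simp only [Finset.mem_filter, Finset.mem_map, mem_boxPartitions]
  constructor
  · rintro ⟨hl, hlast⟩
    have hpos (j : Fin (n + 1)) : l j ≠ 0 :=
      (lt_of_lt_of_le (Fin.pos_of_ne_zero hlast) (hl (Fin.le_last j))).ne'
    refine ⟨fun j => (l j).pred (hpos j), fun i j hij => ?_, ?_⟩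
    · exact Fin.pred_le_pred_iff.2 (hl hij)
    · ext j; simp
  · rintro ⟨l, hl, rfl⟩
    exact ⟨Fin.strictMono_succ.monotone.comp_antitone hl, Fin.succ_ne_zero _⟩

theorem antitone_snoc_zero {n M : ℕ} {l : Fin n → Fin (M + 1)} :
    Antitone (Fin.snoc (α := fun _ => Fin (M + 1)) l 0) ↔ Antitone l := by
  refine ⟨fun h => ?_, fun h i j => ?_⟩
  · simpa [Function.comp_def] using h.comp_monotone Fin.strictMono_castSucc.monotone
  · cases j using Fin.lastCases with
    | last => simp
    | cast j =>
      cases i using Fin.lastCases with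
      | last => exact fun hij => absurd hij (Fin.castSucc_lt_last j).not_ge
      | cast i => simpa using @h i j

theorem boxPartitions_filter_last_eq_zero (n M : ℕ) :
    {l ∈ boxPartitions (n + 1) (M + 1) | l (Fin.last n) = 0} =
      (boxPartitions n (M + 1)).map
        ⟨fun l => Fin.snoc l 0, Fin.snoc_left_injective (α := fun _ => Fin (M + 1)) 0⟩ := by
  ext l
  simp only [Finset.mem_filter, Finset.mem_map, mem_boxPartitions, Function.Embedding.coeFn_mk]
  constructor
  · rintro ⟨hl, hlast⟩
    have hsnoc : Fin.snoc (Fin.init l) 0 = l := hlast ▸ Fin.snoc_init_self l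
    exact ⟨Fin.init l, antitone_snoc_zero.1 (hsnoc.symm ▸ hl), hsnoc⟩
  · rintro ⟨l, hl, rfl⟩
    exact ⟨antitone_snoc_zero.2 hl, by simp⟩

theorem sum_boxPartitions_succ {A : Type*} [AddCommMonoid A] {n M : ℕ}
    (f : (Fin (n + 1) → Fin (M + 1)) → A) :
    ∑ l ∈ boxPartitions (n + 1) (M + 1), f l =
      ∑ l ∈ boxPartitions (n + 1) M, f (Fin.succ ∘ l) +
        ∑ l ∈ boxPartitions n (M + 1), f (Fin.snoc l 0) := by
  rw [← Finset.sum_filter_not_add_sum_filter _ (fun l => l (Fin.last n) = 0),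
    boxPartitions_filter_last_ne_zero, boxPartitions_filter_last_eq_zero, Finset.sum_map,
    Finset.sum_map]
  rfl

end Partitions

section SchurNumerator

variable {R : Type*} [CommRing R] {n : ℕ}

/-- The bialternant numerator of the Schur function `s_l`; for 0-indexed `j` the exponent
`l_j + n - j` of the paper is `l j + j.rev`. -/
def schurNumerator (x : Fin n → R) (l : Fin n → ℕ) : R :=
  (of fun i j => x i ^ (l j + j.rev)).det

theorem schurNumerator_add_one (x : Fin n → R) (l : Fin n → ℕ) :
    schurNumerator x (l + 1) = (∏ i, x i) * schurNumerator x l := by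
  rw [schurNumerator, schurNumerator, ← det_mul_column]
  congr! with i j
  simp [← pow_succ', add_right_comm]

theorem schurNumerator_snoc_zero (x : Fin (n + 1) → R) (l : Fin n → ℕ) :
    schurNumerator x (Fin.snoc l 0 : Fin (n + 1) → ℕ) =
      ∑ i : Fin (n + 1), (-1) ^ (i + n : ℕ) *
        ((∏ k, i.removeNth x k) * schurNumerator (i.removeNth x) l) := by
  rw [schurNumerator, det_succ_column _ (Fin.last n)]
  refine Finset.sum_congr rfl fun i _ => ?_
  rw [← schurNumerator_add_one]
  have hminor : (of fun i j => x i ^ ((Fin.snoc l 0 : Fin (n + 1) → ℕ) j + j.rev : ℕ)).submatrix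
      i.succAbove (Fin.last n).succAbove = of fun k j => i.removeNth x k ^ ((l + 1) j + j.rev) := by
    ext k j
    simp only [submatrix_apply, of_apply, Fin.succAbove_last, Fin.snoc_castSucc, Fin.val_rev,
      Fin.val_castSucc, Fin.removeNth, Pi.add_apply, Pi.one_apply]
    congr 1
    lia
  rw [hminor]
  simp [schurNumerator]

/-- The sum of the bialternant numerators over the partitions with at most `n` parts, all
smaller than `M`; taking `M = 0` is allowed so that the recursion starts at an empty sum. -/
def schurNumeratorSum (M : ℕ) (x : Fin n → R) : R :=
  ∑ l ∈ boxPartitions n M, schurNumerator x fun j => l j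

theorem schurNumeratorSum_succ (M : ℕ) (x : Fin (n + 1) → R) :
    schurNumeratorSum (M + 1) x = (∏ i, x i) * schurNumeratorSum M x +
      ∑ i : Fin (n + 1), (-1) ^ (i + n : ℕ) *
        ((∏ k, i.removeNth x k) * schurNumeratorSum (M + 1) (i.removeNth x)) := by
  have hsnoc (l : Fin n → Fin (M + 1)) :
      (fun j => ((Fin.snoc l 0 : Fin (n + 1) → Fin (M + 1)) j : ℕ)) =
        (Fin.snoc (fun j => (l j : ℕ)) 0 : Fin (n + 1) → ℕ) :=
    Fin.comp_snoc (α := Fin (M + 1)) Fin.val l 0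
  simp only [schurNumeratorSum, sum_boxPartitions_succ, hsnoc, schurNumerator_snoc_zero,
    Finset.mul_sum]
  rw [Finset.sum_comm]
  congr! 2
  exact schurNumerator_add_one x _

end SchurNumerator

section Denominator

variable {R : Type*} [CommRing R] {n : ℕ}

/-- The denominator of Macdonald's identity, without the Vandermonde factor. -/
def macdonaldDenominator (x : Fin n → R) : R :=
  (∏ i, (1 - x i)) * ∏ i, ∏ j ∈ Finset.Ioi i, (x i * x j - 1)

theorem prod_prod_Ioi_eq_prod_prod_ite {ι M : Type*} [CommMonoid M] [Fintype ι] [LinearOrder ι]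
    [LocallyFiniteOrderTop ι] (f : ι → ι → M) :
    ∏ i, ∏ j ∈ Finset.Ioi i, f i j = ∏ i, ∏ j, if i < j then f i j else 1 := by
  refine Finset.prod_congr rfl fun i _ => ?_
  rw [← Finset.prod_filter, Finset.filter_lt_eq_Ioi]

theorem prod_prod_Ioi_succAbove {M : Type*} [CommMonoid M]
    (f : Fin (n + 1) → Fin (n + 1) → M) (hf : ∀ i j, f i j = f j i) (p : Fin (n + 1)) :
    ∏ i, ∏ j ∈ Finset.Ioi i, f i j =
      (∏ k, f p (p.succAbove k)) *
        ∏ i, ∏ j ∈ Finset.Ioi i, f (p.succAbove i) (p.succAbove j) := by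
  have hpairs (k : Fin n) :
      (if p < p.succAbove k then f p (p.succAbove k) else 1) *
        (if p.succAbove k < p then f (p.succAbove k) p else 1) = f p (p.succAbove k) := by
    rcases (Fin.succAbove_ne p k).lt_or_gt with h | h <;> simp [h, h.not_gt, hf p]
  simp only [prod_prod_Ioi_eq_prod_prod_ite]
  simp only [Fin.prod_univ_succAbove _ p, lt_irrefl, if_false, one_mul,
    Fin.succAbove_lt_succAbove_iff, Finset.prod_mul_distrib, ← mul_assoc]
  rw [← Finset.prod_mul_distrib, Finset.prod_congr rfl fun k _ => hpairs k]

theorem macdonaldDenominator_eq_macdonaldFactor_mul (x : Fin (n + 1) → R) (p : Fin (n + 1)) :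
    macdonaldDenominator x = macdonaldFactor x p * macdonaldDenominator (p.removeNth x) := by
  have hcompl : ∏ k ∈ {p}ᶜ, (x p * x k - 1) = ∏ k, (x p * x (p.succAbove k) - 1) := by
    rw [← Fin.image_succAbove_univ, Finset.prod_image Fin.succAbove_right_injective.injOn]
  rw [macdonaldDenominator, Fin.prod_univ_succAbove _ p, macdonaldFactor, hcompl,
    prod_prod_Ioi_succAbove (fun i j => x i * x j - 1) (fun i j => by rw [mul_comm]) p]
  simp only [macdonaldDenominator, Fin.removeNth]
  ring

end Denominator

theorem schurNumeratorSum_mul_macdonaldDenominator {R : Type*} [CommRing R] {n : ℕ} (M : ℕ)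
    (x : Fin n → R) :
    schurNumeratorSum M x * macdonaldDenominator x =
      (reflectedVandermonde (x ^ (M + n - 1)) x).det := by
  induction n generalizing M with
  | zero => simp [schurNumeratorSum, schurNumerator, macdonaldDenominator, boxPartitions]
  | succ n ihn =>
    induction M with
    | zero =>
      have hempty : schurNumeratorSum 0 x = 0 := by simp [schurNumeratorSum, boxPartitions]
      have hlast : (reflectedVandermonde (x ^ (0 + (n + 1) - 1)) x).det = 0 :=
        det_eq_zero_of_column_eq_zero (Fin.last n) fun i => by simp [reflectedVandermonde]
      rw [hempty, hlast, zero_mul]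
    | succ M ihM =>
      have hpow : x ^ (M + 1 + (n + 1) - 1) = x * x ^ (M + (n + 1) - 1) := by
        rw [← pow_succ']; congr 1; lia
      rw [schurNumeratorSum_succ, hpow, det_reflectedVandermonde_mul, ← ihM, add_mul, mul_assoc,
        Finset.sum_mul]
      congr! 2 with i
      have hpow' : i.removeNth (x ^ (M + (n + 1) - 1)) = i.removeNth x ^ (M + 1 + n - 1) := by
        ext j
        simp only [Fin.removeNth, Pi.pow_apply]
        congr 1
        lia
      rw [macdonaldDenominator_eq_macdonaldFactor_mul x i, hpow', ← ihn (M + 1) (i.removeNth x)]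
      ring

/-- **Macdonald's identity** (Theorem I), with denominators cleared.
Partitions `λ ⊆ {m^n}` are encoded as antitone functions `Fin n → Fin (m+1)`
(so `λ_j = l j` for the 0-indexed `j`, each part at most `m`).
The exponent `λ_j + n - j` (for `1 ≤ j ≤ n`) becomes `l j + (n - 1 - j)` and the
right-hand entries `x_i^{j-1} - x_i^{m+2n-j}` become `x i ^ j - x i ^ (m + 2*n - 1 - j)`
with 0-indexed `j`. -/
theorem macdonald_identity (m n : ℕ) (hm : 0 < m) (hn : 0 < n)
    (R : Type*) [CommRing R] (x : Fin n → R) :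
    (∑ l ∈ Finset.univ.filter
        (fun l : Fin n → Fin (m + 1) => ∀ i j : Fin n, i ≤ j → (l j : ℕ) ≤ (l i : ℕ)),
        Matrix.det (Matrix.of fun i j : Fin n => x i ^ ((l j : ℕ) + (n - 1 - (j : ℕ))))) *
      (∏ i : Fin n, (1 - x i)) *
      (∏ i : Fin n, ∏ j ∈ Finset.Ioi i, (x i * x j - 1)) =
    Matrix.det (Matrix.of fun i j : Fin n =>
      x i ^ (j : ℕ) - x i ^ (m + 2 * n - 1 - (j : ℕ))) := by
  have hleft : schurNumeratorSum (m + 1) x = ∑ l ∈ Finset.univ.filter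
      (fun l : Fin n → Fin (m + 1) => ∀ i j : Fin n, i ≤ j → (l j : ℕ) ≤ (l i : ℕ)),
      det (of fun i j : Fin n => x i ^ ((l j : ℕ) + (n - 1 - (j : ℕ)))) := by
    simp only [schurNumeratorSum, schurNumerator, boxPartitions, Fin.val_rev, Nat.sub_sub,
      Nat.add_comm 1]
  have hright : reflectedVandermonde (x ^ (m + 1 + n - 1)) x =
      of fun i j : Fin n => x i ^ (j : ℕ) - x i ^ (m + 2 * n - 1 - (j : ℕ)) := by
    ext i j
    simp only [reflectedVandermonde, of_apply, Pi.pow_apply, ← pow_add, Fin.val_rev]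
    congr 2
    lia
  rw [← hleft, ← hright, mul_assoc]
  exact schurNumeratorSum_mul_macdonaldDenominator (m + 1) x
end

section
/- For every positive integer m, every positive even integer n, and all elements x_1, …, x_n of a commutative ring, the following identity holds: ∑_{λ ⊆ {m^n}, λ' even} det((x_i^{λ_j + n − j})_{1≤i,j≤n}) · ∏_{1 ≤ i < j ≤ n} (x_i x_j − 1) = ∑_{σ ∈ S_n} ∑_{S ⊆ {1,…,n}, |S| even} (−1)^{inv(σ)} ∏_{i ∈ S} x_i^{m+2n−1−σ(i)} ∏_{i ∉ S} x_i^{σ(i)−1}, where the outer sum on the left is over all partitions λ with at most n parts, each at most m, whose conjugate partition λ' has all parts even, and inv(σ) denotes the number of inversions of σ. (This is Okada's identity ∑_{λ ⊆ {m^n}, λ' even} s_λ = (1/2)(det(x_i^{j−1} − x_i^{m+2n−1−j}) + det(x_i^{j−1} + x_i^{m+2n−1−j})) / ∏_{i<j} (x_i x_j − 1)(x_i − x_j) with denominators cleared.) -/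
open scoped Classical

/-!
Dividing both sides by the Vandermonde product `∏_{i < j} (x_i - x_j)` turns every factor
`x_i x_j - 1` into `w(x_i, x_j)`, where `w(x, y) = (x y - 1) / (x - y)`. For a fixed set `S` the sum
over `σ` on the right is the determinant of a projective Vandermonde matrix, so after the division
it becomes `∏_{i ∈ S} x_i ^ N`, with `N = m + n - 1`, times a factor for each pair `i < j`: `1`
inside `S`, `-1` outside `S` and `w` across. Write `P_p(N)` for the sum of these terms over the sets
`S` of parity `p`.

Let `D_a` be the operator `F ↦ ∑ i, x_i ^ a * ∏_{k ≠ i} w(x_i, x_k) * F(x without x_i)`; a Laplace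
expansion along the first column shows that it prepends the exponent `a` to a normalised alternant.
If the largest part allowed is attained in a partition with even conjugate, then its first two parts
are equal to it, so the left side for `m` and `n + 2` variables is the one for `m - 1` plus
`D_{m+n+1} D_{m+n}` applied to the one for `m` and `n` variables. On the right, the partial fraction
identity `∑_{y ∈ T} y ∏_{z ∈ T, z ≠ y} w(y, z) = ∏_{y ∈ T} y - [|T| even]` gives
`D_{N+1} P_0(N) = P_1(N+1)` and `D_{N+1} P_1(N) = P_0(N+1) - P_0(N)`, which is the same recursion.
It starts from the empty sum on the left and from `P_0(n) = 0` for `n + 2` variables on the right,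
where the exponents in two columns are interchanged. Everything is an identity of polynomials with
integer coefficients, so it may be checked over a field of rational functions.
-/

namespace Okada

open Finset

section PairProd

variable {M : Type*} [CommMonoid M] {n : ℕ}

/-- The product of `F i j` over the pairs of indices `i < j`. -/
def pairProd (F : Fin n → Fin n → M) : M :=
  ∏ i, ∏ j ∈ Ioi i, F i j

theorem pairProd_mul (F G : Fin n → Fin n → M) :
    pairProd (fun i j => F i j * G i j) = pairProd F * pairProd G := by
  simp only [pairProd, prod_mul_distrib]

theorem pairProd_congr {F G : Fin n → Fin n → M} (h : ∀ i j, i ≠ j → F i j = G i j) :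
    pairProd F = pairProd G :=
  prod_congr rfl fun i _ => prod_congr rfl fun j hj => h i j (mem_Ioi.1 hj).ne

theorem pairProd_of_subsingleton [Subsingleton (Fin n)] (F : Fin n → Fin n → M) :
    pairProd F = 1 :=
  prod_eq_one fun _ _ => prod_eq_one fun _ hj =>
    absurd (Subsingleton.elim _ _) (mem_Ioi.1 hj).ne

theorem map_pairProd {N H : Type*} [CommMonoid N] [FunLike H M N] [MonoidHomClass H M N] (φ : H)
    (F : Fin n → Fin n → M) : φ (pairProd F) = pairProd fun i j => φ (F i j) := by
  simp only [pairProd, map_prod]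

theorem pairProd_succAbove (F : Fin (n + 1) → Fin (n + 1) → M) (p : Fin (n + 1)) :
    pairProd F =
      (∏ k, if p.succAbove k < p then F (p.succAbove k) p else F p (p.succAbove k)) *
        pairProd fun i j => F (p.succAbove i) (p.succAbove j) := by
  have split_pair (k : Fin n) :
      (if p < p.succAbove k then F p (p.succAbove k) else 1) *
          (if p.succAbove k < p then F (p.succAbove k) p else 1) =
        if p.succAbove k < p then F (p.succAbove k) p else F p (p.succAbove k) := by
    rcases (p.succAbove_ne k).lt_or_gt with h | h <;> simp [h, h.not_gt]
  simp only [pairProd, ← filter_lt_eq_Ioi, prod_filter, Fin.prod_univ_succAbove _ p, lt_irrefl,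
    if_false, one_mul, Fin.succAbove_lt_succAbove_iff, prod_mul_distrib]
  rw [← mul_assoc, ← prod_mul_distrib, prod_congr rfl fun k _ => split_pair k]

theorem pairProd_succAbove_of_symm {F : Fin (n + 1) → Fin (n + 1) → M}
    (hF : ∀ i j, F i j = F j i) (p : Fin (n + 1)) :
    pairProd F =
      (∏ k, F p (p.succAbove k)) * pairProd fun i j => F (p.succAbove i) (p.succAbove j) := by
  simp only [pairProd_succAbove F p, hF (p.succAbove _) p, ite_self]

theorem pairProd_succAbove_of_antisymm {R : Type*} [CommRing R]
    {F : Fin (n + 1) → Fin (n + 1) → R} (hF : ∀ i j, F i j = -F j i) (p : Fin (n + 1)) :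
    pairProd F = (-1) ^ (p : ℕ) * (∏ k, F p (p.succAbove k)) *
      pairProd fun i j => F (p.succAbove i) (p.succAbove j) := by
  have sign_eq : (-1 : R) ^ (p : ℕ) = ∏ k, if p.succAbove k < p then -1 else 1 := by
    have h : ∏ j, (if j < p then (-1 : R) else 1) = (-1) ^ (p : ℕ) := by
      rw [← prod_filter, prod_const, filter_gt_eq_Iio, Fin.card_Iio]
    simpa [Fin.prod_univ_succAbove _ p] using h.symm
  rw [pairProd_succAbove F p, sign_eq, ← prod_mul_distrib]
  congr! 2 with k
  rw [hF (p.succAbove k) p]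
  split_ifs <;> ring

end PairProd

section EvenDet

variable {ι R : Type*} [Fintype ι] [DecidableEq ι] [CommRing R]

/-- The sum of the determinants obtained from `A` by replacing an even number of its rows by the
corresponding rows of `B`. -/
def evenDet (A B : Matrix ι ι R) : R :=
  ∑ S : Finset ι with Even #S, Matrix.det (.of fun i j => if i ∈ S then B i j else A i j)

theorem evenDet_eq_sum_perm (A B : Matrix ι ι R) :
    evenDet A B = ∑ σ : Equiv.Perm ι, ∑ S : Finset ι with Even #S,
      ((Equiv.Perm.sign σ : ℤ) : R) * ((∏ i ∈ S, B i (σ i)) * ∏ i ∈ Sᶜ, A i (σ i)) := by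
  rw [sum_comm, evenDet]
  refine sum_congr rfl fun S _ => ?_
  rw [← Matrix.det_transpose, Matrix.det_apply']
  simp only [Matrix.transpose_apply, Matrix.of_apply, prod_ite, filter_univ_mem,
    filter_notMem_eq_sdiff, compl_eq_univ_sdiff]

theorem map_evenDet {R' : Type*} [CommRing R'] (φ : R →+* R') (A B : Matrix ι ι R) :
    φ (evenDet A B) = evenDet (A.map φ) (B.map φ) := by
  simp only [evenDet_eq_sum_perm, map_sum, map_mul, map_prod, map_intCast, Matrix.map_apply]

theorem det_add_eq_sum (A B : Matrix ι ι R) :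
    (A + B).det = ∑ S : Finset ι, Matrix.det (.of fun i j => if i ∈ S then B i j else A i j) := by
  rw [add_comm]
  refine (Matrix.detRowAlternating.map_add_univ B A).trans
    (sum_congr rfl fun S _ => congrArg Matrix.det ?_)
  ext i j
  by_cases hi : i ∈ S <;> simp [Finset.piecewise, hi]

theorem two_mul_evenDet (A B : Matrix ι ι R) :
    2 * evenDet A B = (A + B).det + (A - B).det := by
  have det_neg (S : Finset ι) :
      Matrix.det (.of fun i j => if i ∈ S then (-B) i j else A i j) =
        (-1) ^ #S * Matrix.det (.of fun i j => if i ∈ S then B i j else A i j) := by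
    rw [← prod_const, ← prod_ite_mem_eq, ← Matrix.det_mul_column]
    congr 1
    ext i j
    by_cases hi : i ∈ S <;> simp [hi]
  rw [sub_eq_add_neg, det_add_eq_sum, det_add_eq_sum, evenDet, mul_sum, sum_filter,
    ← sum_add_distrib]
  refine sum_congr rfl fun S _ => ?_
  rw [det_neg]
  split_ifs with hS
  · rw [hS.neg_one_pow]
    ring
  · rw [(Nat.not_even_iff_odd.1 hS).neg_one_pow]
    ring

theorem two_mul_evenDet_eq_zero {A B : Matrix ι ι R} {a b : ι} (hab : a ≠ b)
    (h₁ : ∀ i, B i a = A i b) (h₂ : ∀ i, B i b = A i a) : 2 * evenDet A B = 0 := by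
  have det_add : (A + B).det = 0 :=
    Matrix.det_zero_of_column_eq hab fun i => by simp [h₁, h₂, add_comm]
  have det_sub : (A - B).det = 0 := by
    rw [← Matrix.det_updateCol_add_self _ hab]
    exact Matrix.det_eq_zero_of_column_eq_zero a fun i => by simp [h₁, h₂]
  rw [two_mul_evenDet, det_add, det_sub, add_zero]

end EvenDet

section PairKernel

open Polynomial

variable {K : Type*} [Field K]

/-- The rational function `w(a, b) = (ab - 1) / (a - b)` to which a factor `x_i x_j - 1` is reduced
on division by the Vandermonde product; it takes the junk value `0` on the diagonal. -/
def pairKernel (a b : K) : K :=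
  (a * b - 1) / (a - b)

theorem pairKernel_swap (a b : K) : pairKernel a b = -pairKernel b a := by
  rw [pairKernel, pairKernel, mul_comm, ← neg_sub b a, div_neg]

theorem sum_eval_div_prod_sub (h2 : (2 : K) ≠ 0) {T : Finset K} (hT : ∀ y ∈ T, y ^ 2 ≠ 1)
    {P : K[X]} (hP : P.natDegree ≤ #T + 1) :
    ∑ y ∈ T, P.eval y / ((y ^ 2 - 1) * ∏ z ∈ T.erase y, (y - z)) =
      P.coeff (#T + 1) - P.eval 1 / (2 * ∏ z ∈ T, (1 - z)) +
        P.eval (-1) / (2 * ∏ z ∈ T, (-1 - z)) := by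
  have one_notMem : (1 : K) ∉ T := fun h => hT 1 h (one_pow 2)
  have neg_one_notMem : (-1 : K) ∉ T := fun h => hT (-1) h neg_one_sq
  have one_ne : (1 : K) ≠ -1 := fun h => h2 (by linear_combination h)
  have one_notMem' : (1 : K) ∉ insert (-1) T := by simp [one_ne, one_notMem]
  have card_nodes : #(insert (1 : K) (insert (-1) T)) = #T + 2 := by
    rw [card_insert_of_notMem one_notMem', card_insert_of_notMem neg_one_notMem]
  have coeff_eq := Lagrange.coeff_eq_sum (s := insert (1 : K) (insert (-1) T)) (v := id)
    (Set.injOn_id _) (P := P)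
    ((degree_le_of_natDegree_le hP).trans_lt (by
      rw [card_nodes]
      exact_mod_cast Nat.lt_succ_self _))
  have residue (y : K) (hy : y ∈ T) :
      P.eval (id y) / ∏ z ∈ (insert (1 : K) (insert (-1) T)).erase y, (id y - id z) =
        P.eval y / ((y ^ 2 - 1) * ∏ z ∈ T.erase y, (y - z)) := by
    have hy₁ : y ≠ 1 := ne_of_mem_of_not_mem hy one_notMem
    have hy₂ : y ≠ -1 := ne_of_mem_of_not_mem hy neg_one_notMem
    rw [erase_insert_of_ne hy₁.symm, erase_insert_of_ne hy₂.symm,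
      prod_insert (by simp [one_ne, one_notMem]), prod_insert (by simp [neg_one_notMem])]
    simp only [id]
    ring_nf
  rw [card_nodes, sum_insert one_notMem', sum_insert neg_one_notMem, sum_congr rfl residue,
    erase_insert one_notMem', erase_insert_of_ne one_ne, erase_insert neg_one_notMem,
    prod_insert neg_one_notMem, prod_insert one_notMem] at coeff_eq
  simp only [id] at coeff_eq
  rw [show #T + 2 - 1 = #T + 1 from rfl, show (1 : K) - -1 = 2 by ring,
    show (-1 : K) - 1 = -2 by ring, neg_mul, div_neg] at coeff_eq
  linear_combination -coeff_eq

-- Partial fractions of `X ∏ (z X - 1) / ((X ^ 2 - 1) ∏ (X - z))`, in which the residues at `1` and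
-- `-1` combine to the parity term.
theorem sum_mul_prod_pairKernel (h2 : (2 : K) ≠ 0) {T : Finset K} (hT : ∀ y ∈ T, y ^ 2 ≠ 1) :
    ∑ y ∈ T, y * ∏ z ∈ T.erase y, pairKernel y z = ∏ y ∈ T, y - if Even #T then 1 else 0 := by
  set f : K[X] := ∏ z ∈ T, (C z * X + C (-1)) with hf
  have natDegree_f : f.natDegree ≤ #T := by
    simpa using (natDegree_prod_le T _).trans
      (sum_le_card_nsmul T _ 1 fun z _ => natDegree_linear_le)
  have coeff_f : (X * f).coeff (#T + 1) = ∏ z ∈ T, z := by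
    have h := coeff_prod_of_natDegree_le T (fun z : K => C z * X + C (-1)) 1
      fun z _ => natDegree_linear_le
    simpa [hf, coeff_one] using h
  have eval_f (y : K) : (X * f).eval y = y * ∏ z ∈ T, (y * z - 1) := by
    simp [hf, eval_prod, mul_comm y, sub_eq_add_neg]
  have summand (y : K) (hy : y ∈ T) : y * ∏ z ∈ T.erase y, pairKernel y z =
      (X * f).eval y / ((y ^ 2 - 1) * ∏ z ∈ T.erase y, (y - z)) := by
    have hy' : y ^ 2 - 1 ≠ 0 := sub_ne_zero.2 (hT y hy)
    simp only [eval_f, pairKernel, prod_div_distrib, ← mul_prod_erase T (fun z => y * z - 1) hy]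
    rw [← sq, mul_left_comm, mul_div_mul_left _ _ hy', mul_div_assoc]
  have prod_ne_zero (a : K) (ha : a ^ 2 = 1) : ∏ z ∈ T, (a - z) ≠ 0 :=
    prod_ne_zero_iff.2 fun z hz h => hT z hz (by rw [← sub_eq_zero.1 h, ha])
  have prod_one : ∏ z ∈ T, (1 * z - 1) = (-1) ^ #T * ∏ z ∈ T, (1 - z) := by
    rw [← prod_const, ← prod_mul_distrib]
    exact prod_congr rfl fun z _ => by ring
  have prod_neg_one : ∏ z ∈ T, (-1 * z - 1) = ∏ z ∈ T, (-1 - z) :=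
    prod_congr rfl fun z _ => by ring
  have natDegree_X_mul_f : (X * f).natDegree ≤ #T + 1 := by
    simpa [add_comm] using natDegree_mul_le_of_le (natDegree_X_le (R := K)) natDegree_f
  rw [sum_congr rfl summand, sum_eval_div_prod_sub h2 hT natDegree_X_mul_f, coeff_f,
    eval_f, eval_f, prod_one, prod_neg_one]
  have h₁ := prod_ne_zero 1 (one_pow 2)
  have h₂ := prod_ne_zero (-1) neg_one_sq
  split_ifs with h
  · rw [h.neg_one_pow]
    field_simp
    ring
  · rw [(Nat.not_even_iff_odd.1 h).neg_one_pow]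
    field_simp
    ring

theorem sum_mul_prod_pairKernel_of_injective {ι : Type*} [DecidableEq ι] (h2 : (2 : K) ≠ 0)
    {x : ι → K} (hx : Function.Injective x) (hx_sq : ∀ i, x i ^ 2 ≠ 1) (T : Finset ι) :
    ∑ i ∈ T, x i * ∏ k ∈ T.erase i, pairKernel (x i) (x k) =
      ∏ i ∈ T, x i - if Even #T then 1 else 0 := by
  have h := sum_mul_prod_pairKernel h2 (T := T.map ⟨x, hx⟩) (by simpa using fun i _ => hx_sq i)
  have erase_map (i : ι) : (T.map ⟨x, hx⟩).erase (x i) = (T.erase i).map ⟨x, hx⟩ :=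
    (map_erase ⟨x, hx⟩ T i).symm
  simpa only [sum_map, prod_map, card_map, Function.Embedding.coeFn_mk, erase_map] using h

end PairKernel

section AltStep

variable {K : Type*} [Field K] {n : ℕ}

/-- The operator sending a function `F` of `n` variables to the function
`∑ i, x_i ^ a * ∏_{k ≠ i} w(x_i, x_k) * F(x without x_i)` of `n + 1` variables. -/
def altStep (a : ℕ) (F : (Fin n → K) → K) (x : Fin (n + 1) → K) : K :=
  ∑ i, x i ^ a * (∏ k, pairKernel (x i) (x (i.succAbove k))) * F (i.removeNth x)

theorem altStep_congr {F G : (Fin n → K) → K} {x : Fin (n + 1) → K} (a : ℕ)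
    (h : ∀ i : Fin (n + 1), F (i.removeNth x) = G (i.removeNth x)) :
    altStep a F x = altStep a G x := by
  simp only [altStep, h]

theorem altStep_sum {α : Type*} (a : ℕ) (s : Finset α) (F : α → (Fin n → K) → K)
    (x : Fin (n + 1) → K) :
    altStep a (fun y => ∑ l ∈ s, F l y) x = ∑ l ∈ s, altStep a (F l) x := by
  simp only [altStep, mul_sum]
  exact sum_comm

/-- The alternant `det (x_i ^ e_j)` times `∏_{i < j} w(x_i, x_j)`. When the `x_i` are distinct and
`e` is the exponent of a Schur function `s_λ`, this is `s_λ` times `∏_{i < j} (x_i x_j - 1)`. -/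
def normAlternant (e : Fin n → ℕ) (x : Fin n → K) : K :=
  Matrix.det (.of fun i j => x i ^ e j) * pairProd fun i j => pairKernel (x i) (x j)

theorem normAlternant_succ (e : Fin (n + 1) → ℕ) (x : Fin (n + 1) → K) :
    normAlternant e x = altStep (e 0) (normAlternant (Fin.tail e)) x := by
  rw [normAlternant, Matrix.det_succ_column_zero, sum_mul, altStep]
  refine sum_congr rfl fun i _ => ?_
  rw [pairProd_succAbove_of_antisymm (fun i j => pairKernel_swap (x i) (x j)) i, normAlternant]
  have sign_sq : ((-1 : K) ^ (i : ℕ)) * (-1) ^ (i : ℕ) = 1 := by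
    rw [← mul_pow, neg_one_mul, neg_neg, one_pow]
  simp only [Matrix.of_apply, Matrix.submatrix, Fin.removeNth_apply, Fin.tail]
  linear_combination (x i ^ e 0 * Matrix.det (.of fun k j => x (i.succAbove k) ^ e j.succ) *
    (∏ k, pairKernel (x i) (x (i.succAbove k))) *
    pairProd fun k j => pairKernel (x (i.succAbove k)) (x (i.succAbove j))) * sign_sq

end AltStep

section ParitySum

variable {K : Type*} [Field K] {n : ℕ}

/-- The factor attached to the pair `i, j` by the set `S`, after division by the Vandermonde
product: `w` evaluated at the variable in `S` and the one outside if `S` separates `i` and `j`,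
and `1` or `-1` according to whether both or none of `i`, `j` are in `S`. -/
def splitKernel (x : Fin n → K) (S : Finset (Fin n)) (i j : Fin n) : K :=
  if i ∈ S then if j ∈ S then 1 else pairKernel (x i) (x j)
  else if j ∈ S then pairKernel (x j) (x i) else -1

theorem splitKernel_comm (x : Fin n → K) (S : Finset (Fin n)) (i j : Fin n) :
    splitKernel x S i j = splitKernel x S j i := by
  unfold splitKernel
  split_ifs <;> rfl

/-- The sum of `∏_{i ∈ S} x_i ^ N * ∏_{i < j} splitKernel x S i j` over the sets `S` whose
cardinality has parity `p`. -/
def paritySum (p : ZMod 2) (N : ℕ) (x : Fin n → K) : K :=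
  ∑ S : Finset (Fin n) with (#S : ZMod 2) = p, (∏ i ∈ S, x i ^ N) * pairProd (splitKernel x S)

theorem sum_insert_map_succAbove {M : Type*} [AddCommMonoid M] (i : Fin (n + 1))
    (f : Finset (Fin (n + 1)) → M) :
    ∑ S : Finset (Fin n), f (insert i (S.map i.succAboveEmb)) = ∑ T with i ∈ T, f T := by
  refine sum_nbij' (fun S => insert i (S.map i.succAboveEmb))
    (fun T => ({k | i.succAbove k ∈ T} : Finset (Fin n))) ?_ ?_ ?_ ?_ fun _ _ => rfl
  · simp
  · simp
  · intro S _
    ext k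
    simp
  · intro T hT
    ext k
    rcases Fin.eq_self_or_eq_succAbove i k with rfl | ⟨k, rfl⟩
    · simpa using hT
    · simp

theorem splitKernel_insert_map_succAbove (x : Fin (n + 1) → K) (i : Fin (n + 1))
    (S : Finset (Fin n)) (j k : Fin n) :
    splitKernel x (insert i (S.map i.succAboveEmb)) (i.succAbove j) (i.succAbove k) =
      splitKernel (i.removeNth x) S j k := by
  simp [splitKernel, Fin.removeNth_apply]

theorem pairProd_splitKernel_mul_prod_erase (x : Fin (n + 1) → K) {T : Finset (Fin (n + 1))}
    {i : Fin (n + 1)} (hi : i ∈ T) :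
    pairProd (splitKernel x T) * ∏ k ∈ T.erase i, pairKernel (x i) (x k) =
      (∏ k, pairKernel (x i) (x (i.succAbove k))) *
        pairProd fun j k => splitKernel x T (i.succAbove j) (i.succAbove k) := by
  have prod_erase_eq : ∏ k ∈ T.erase i, pairKernel (x i) (x k) =
      ∏ k, if i.succAbove k ∈ T then pairKernel (x i) (x (i.succAbove k)) else 1 := by
    rw [← prod_ite_mem_eq, Fin.prod_univ_succAbove _ i]
    simp
  rw [pairProd_succAbove_of_symm (splitKernel_comm x T) i, prod_erase_eq, mul_right_comm,
    ← prod_mul_distrib]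
  congr! 2 with k
  simp only [splitKernel, hi, if_true]
  split_ifs <;> simp

theorem altStep_paritySum_eq_sum (p : ZMod 2) (N : ℕ) (x : Fin (n + 1) → K) :
    altStep (N + 1) (paritySum p N) x =
      ∑ T : Finset (Fin (n + 1)) with (#T : ZMod 2) = p + 1,
        (∏ i ∈ T, x i ^ N) * pairProd (splitKernel x T) *
          ∑ i ∈ T, x i * ∏ k ∈ T.erase i, pairKernel (x i) (x k) := by
  have summand (i : Fin (n + 1)) (S : Finset (Fin n)) :
      x i ^ (N + 1) * (∏ k, pairKernel (x i) (x (i.succAbove k))) *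
          ((∏ k ∈ S, i.removeNth x k ^ N) * pairProd (splitKernel (i.removeNth x) S)) =
        (∏ k ∈ insert i (S.map i.succAboveEmb), x k ^ N) *
          pairProd (splitKernel x (insert i (S.map i.succAboveEmb))) *
          (x i * ∏ k ∈ (insert i (S.map i.succAboveEmb)).erase i, pairKernel (x i) (x k)) := by
    have h := pairProd_splitKernel_mul_prod_erase x (mem_insert_self i (S.map i.succAboveEmb))
    simp only [splitKernel_insert_map_succAbove] at h
    rw [prod_insert (by simp), prod_map]
    simp only [Fin.removeNth_apply, Fin.succAboveEmb_apply] at h ⊢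
    linear_combination -(x i ^ (N + 1) * ∏ k ∈ S, x (i.succAbove k) ^ N) * h
  have card_insert_map (i : Fin (n + 1)) (S : Finset (Fin n)) :
      (#S : ZMod 2) = p ↔ (#(insert i (S.map i.succAboveEmb)) : ZMod 2) = p + 1 := by
    rw [card_insert_of_notMem (by simp), card_map, Nat.cast_succ, add_left_inj]
  calc altStep (N + 1) (paritySum p N) x
      = ∑ i, ∑ T : Finset (Fin (n + 1)) with i ∈ T, if (#T : ZMod 2) = p + 1 then
          (∏ k ∈ T, x k ^ N) * pairProd (splitKernel x T) *
            (x i * ∏ k ∈ T.erase i, pairKernel (x i) (x k)) else 0 := by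
        refine sum_congr rfl fun i _ => ?_
        rw [← sum_insert_map_succAbove, paritySum, sum_filter, mul_sum]
        refine sum_congr rfl fun S _ => ?_
        rw [mul_ite, mul_zero]
        exact if_congr (card_insert_map i S) (summand i S) rfl
    _ = _ := by
        rw [sum_comm' (t' := univ) (s' := fun T => T) (by simp), sum_filter]
        simp only [mul_sum, sum_ite_irrel, sum_const_zero]

theorem altStep_paritySum_zero (h2 : (2 : K) ≠ 0) {x : Fin (n + 1) → K}
    (hx : Function.Injective x) (hx_sq : ∀ i, x i ^ 2 ≠ 1) (N : ℕ) :
    altStep (N + 1) (paritySum 0 N) x = paritySum 1 (N + 1) x := by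
  rw [altStep_paritySum_eq_sum, paritySum, zero_add]
  refine sum_congr rfl fun T hT => ?_
  have odd_card : ¬Even #T :=
    Nat.not_even_iff_odd.2 ((ZMod.natCast_eq_one_iff_odd).1 (mem_filter.1 hT).2)
  rw [sum_mul_prod_pairKernel_of_injective h2 hx hx_sq, if_neg odd_card, sub_zero]
  simp only [pow_succ, prod_mul_distrib]
  ring

theorem altStep_paritySum_one (h2 : (2 : K) ≠ 0) {x : Fin (n + 1) → K}
    (hx : Function.Injective x) (hx_sq : ∀ i, x i ^ 2 ≠ 1) (N : ℕ) :
    altStep (N + 1) (paritySum 1 N) x = paritySum 0 (N + 1) x - paritySum 0 N x := by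
  rw [altStep_paritySum_eq_sum, paritySum, paritySum, ← sum_sub_distrib,
    show (1 + 1 : ZMod 2) = 0 from rfl]
  refine sum_congr rfl fun T hT => ?_
  have even_card : Even #T := (ZMod.natCast_eq_zero_iff_even).1 (mem_filter.1 hT).2
  rw [sum_mul_prod_pairKernel_of_injective h2 hx hx_sq, if_pos even_card]
  simp only [pow_succ, prod_mul_distrib]
  ring

end ParitySum

section Alternants

variable {K : Type*} [Field K] {n : ℕ}

theorem det_ite_pow_eq {x : Fin n → K} (hx : Function.Injective x) (N : ℕ) (S : Finset (Fin n)) :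
    Matrix.det (.of fun i j => if i ∈ S then x i ^ (N + (j.rev : ℕ)) else x i ^ (j : ℕ)) =
      pairProd (fun i j => x i - x j) * ((∏ i ∈ S, x i ^ N) * pairProd (splitKernel x S)) := by
  have matrix_eq : (.of fun i j => if i ∈ S then x i ^ (N + (j.rev : ℕ)) else x i ^ (j : ℕ)) =
      Matrix.of fun i j => (if i ∈ S then x i ^ N else 1) *
        Matrix.projVandermonde (fun i => if i ∈ S then 1 else x i)
          (fun i => if i ∈ S then x i else 1) i j := by
    ext i j
    by_cases hi : i ∈ S <;> simp [Matrix.projVandermonde_apply, hi, pow_add]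
  rw [matrix_eq, Matrix.det_mul_column, Matrix.det_projVandermonde, prod_ite_mem_eq,
    mul_left_comm, ← pairProd_mul]
  congr 1
  refine pairProd_congr fun i j hij => ?_
  have hij₁ : x i - x j ≠ 0 := sub_ne_zero.2 (hx.ne hij)
  have hij₂ : x j - x i ≠ 0 := sub_ne_zero.2 (hx.ne hij.symm)
  simp only [splitKernel, pairKernel]
  split_ifs <;> field_simp <;> ring

theorem evenDet_eq_mul_paritySum {x : Fin n → K} (hx : Function.Injective x) (N : ℕ) :
    evenDet (.of fun i j => x i ^ (j : ℕ)) (.of fun i j => x i ^ (N + (j.rev : ℕ))) =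
      pairProd (fun i j => x i - x j) * paritySum 0 N x := by
  simp only [evenDet, paritySum, mul_sum, ZMod.natCast_eq_zero_iff_even, Matrix.of_apply,
    det_ite_pow_eq hx N]

theorem paritySum_zero_eq_zero (h2 : (2 : K) ≠ 0) {x : Fin (n + 2) → K}
    (hx : Function.Injective x) : paritySum 0 n x = 0 := by
  have pairProd_ne_zero : pairProd (fun i j => x i - x j) ≠ 0 :=
    prod_ne_zero_iff.2 fun i _ => prod_ne_zero_iff.2 fun j hj =>
      sub_ne_zero.2 (hx.ne (mem_Ioi.1 hj).ne)
  have h : 2 * evenDet (.of fun i j => x i ^ (j : ℕ)) (.of fun i j => x i ^ (n + (j.rev : ℕ))) =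
      0 :=
    two_mul_evenDet_eq_zero (a := Fin.last (n + 1)) (b := (Fin.last n).castSucc)
      (Fin.castSucc_lt_last _).ne' (by simp) (by simp [Fin.val_rev])
  rw [evenDet_eq_mul_paritySum hx] at h
  simpa [h2, pairProd_ne_zero] using h

theorem paritySum_zero_of_subsingleton [Subsingleton (Fin n)] (N : ℕ) (x : Fin n → K) :
    paritySum 0 N x = 1 := by
  have filter_even : ({S | (#S : ZMod 2) = 0} : Finset (Finset (Fin n))) = {∅} := by
    ext S
    rw [mem_filter_univ, mem_singleton, ZMod.natCast_eq_zero_iff_even]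
    refine ⟨fun hS => card_eq_zero.1 ?_, fun hS => by simp [hS]⟩
    have := card_le_one_of_subsingleton S
    grind
  rw [paritySum, filter_even, sum_singleton, prod_empty, one_mul,
    pairProd_of_subsingleton]

theorem paritySum_one_fin_one (N : ℕ) (x : Fin 1 → K) : paritySum 1 N x = x 0 ^ N := by
  have filter_odd : ({S | (#S : ZMod 2) = 1} : Finset (Finset (Fin 1))) = {{0}} := by decide
  simp [paritySum, filter_odd, pairProd_of_subsingleton]

end Alternants

section Partitions

variable {M n : ℕ}

/-- The partitions with at most `n` parts, all less than `M`, whose conjugate is even. The bound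
is strict so that the recursion in `M` starts from the empty set at `M = 0`. -/
noncomputable def evenColumnPartitions (M n : ℕ) : Finset (Fin n → ℕ) :=
  {l ∈ Fintype.piFinset fun _ => range M | Antitone l ∧ ∀ c, 1 ≤ c → Even #{i | c ≤ l i}}

theorem mem_evenColumnPartitions {l : Fin n → ℕ} :
    l ∈ evenColumnPartitions M n ↔
      (∀ i, l i < M) ∧ Antitone l ∧ ∀ c, 1 ≤ c → Even #{i | c ≤ l i} := by
  simp [evenColumnPartitions]

theorem evenColumnPartitions_zero_succ : evenColumnPartitions 0 (n + 1) = ∅ :=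
  eq_empty_of_forall_notMem fun _ h => Nat.not_lt_zero _ ((mem_evenColumnPartitions.1 h).1 0)

theorem evenColumnPartitions_succ_of_subsingleton [Subsingleton (Fin n)] :
    evenColumnPartitions (M + 1) n = {0} := by
  ext l
  rw [mem_evenColumnPartitions, mem_singleton]
  constructor
  · rintro ⟨-, -, hl⟩
    ext i
    by_contra hi
    have filter_eq : ({j | l i ≤ l j} : Finset (Fin n)) = {i} := by
      ext j
      simp [Subsingleton.elim j i]
    have h := hl (l i) (Nat.one_le_iff_ne_zero.2 hi)
    simp [filter_eq] at h
  · rintro rfl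
    refine ⟨fun _ => M.succ_pos, antitone_const, fun c hc => ?_⟩
    simp [Nat.one_le_iff_ne_zero.1 hc]

theorem antitone_cons_iff {a : ℕ} {l : Fin n → ℕ} :
    Antitone (Fin.cons a l : Fin (n + 1) → ℕ) ↔ (∀ i, l i ≤ a) ∧ Antitone l := by
  simp [Antitone, Fin.forall_fin_succ]

theorem cons_cons_mem_evenColumnPartitions {l : Fin n → ℕ} :
    (Fin.cons M (Fin.cons M l : Fin (n + 1) → ℕ) : Fin (n + 2) → ℕ) ∈
      evenColumnPartitions (M + 1) (n + 2) ↔ l ∈ evenColumnPartitions (M + 1) n := by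
  have even_card (c : ℕ) :
      Even #{i | c ≤ (Fin.cons M (Fin.cons M l : Fin (n + 1) → ℕ) : Fin (n + 2) → ℕ) i} ↔
        Even #{i | c ≤ l i} := by
    simp only [Fin.card_filter_univ_succ', Fin.cons_zero, Fin.cons_succ, ← add_assoc]
    split_ifs <;> simp [parity_simps]
  simp only [mem_evenColumnPartitions, even_card, antitone_cons_iff, Fin.forall_fin_succ,
    Fin.cons_zero, Fin.cons_succ, Nat.lt_succ_iff, le_refl, true_and]
  tauto

theorem apply_one_eq_of_mem_evenColumnPartitions {l : Fin (n + 2) → ℕ}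
    (hl : l ∈ evenColumnPartitions (M + 1) (n + 2)) (h0 : l 0 = M) : l 1 = M := by
  obtain ⟨lt, anti, even_card⟩ := mem_evenColumnPartitions.1 hl
  by_contra h1
  have h1_lt : l 1 < M := lt_of_le_of_ne (Nat.lt_succ_iff.1 (lt 1)) h1
  have filter_eq : ({i | M ≤ l i} : Finset (Fin (n + 2))) = {0} := by
    ext i
    simp only [mem_filter_univ, mem_singleton]
    refine ⟨fun hi => ?_, fun hi => (hi ▸ h0).ge⟩
    by_contra hi0
    exact absurd (anti (Fin.one_le_of_ne_zero hi0)) (h1_lt.trans_le hi).not_ge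
  have h := even_card M (Nat.one_le_of_lt h1_lt)
  simp [filter_eq] at h

theorem cons_cons_tail_tail_of_mem_evenColumnPartitions {l : Fin (n + 2) → ℕ}
    (hl : l ∈ evenColumnPartitions (M + 1) (n + 2)) (h0 : l 0 = M) :
    (Fin.cons M (Fin.cons M (Fin.tail (Fin.tail l)) : Fin (n + 1) → ℕ) : Fin (n + 2) → ℕ) = l := by
  have h1 : Fin.tail l 0 = M := apply_one_eq_of_mem_evenColumnPartitions hl h0
  nth_rw 2 [← h1]
  rw [Fin.cons_self_tail, ← h0, Fin.cons_self_tail]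

theorem filter_ne_evenColumnPartitions_succ :
    {l ∈ evenColumnPartitions (M + 1) (n + 1) | l 0 ≠ M} = evenColumnPartitions M (n + 1) := by
  ext l
  simp only [mem_filter, mem_evenColumnPartitions]
  constructor
  · rintro ⟨⟨lt, anti, even_card⟩, h0⟩
    exact ⟨fun i => (anti i.zero_le).trans_lt (lt_of_le_of_ne (Nat.lt_succ_iff.1 (lt 0)) h0),
      anti, even_card⟩
  · rintro ⟨lt, anti, even_card⟩
    exact ⟨⟨fun i => (lt i).trans M.lt_succ_self, anti, even_card⟩, (lt 0).ne⟩

theorem sum_evenColumnPartitions_succ {A : Type*} [AddCommMonoid A] (M n : ℕ)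
    (F : (Fin (n + 2) → ℕ) → A) :
    ∑ l ∈ evenColumnPartitions (M + 1) (n + 2), F l =
      ∑ l ∈ evenColumnPartitions M (n + 2), F l +
        ∑ l ∈ evenColumnPartitions (M + 1) n,
          F (Fin.cons M (Fin.cons M l : Fin (n + 1) → ℕ)) := by
  rw [← sum_filter_not_add_sum_filter (evenColumnPartitions (M + 1) (n + 2)) (fun l => l 0 = M),
    filter_ne_evenColumnPartitions_succ]
  congr 1
  symm
  refine sum_bij (fun l _ => Fin.cons M (Fin.cons M l : Fin (n + 1) → ℕ)) ?_ ?_ ?_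
    fun _ _ => rfl
  · exact fun l hl => mem_filter.2 ⟨cons_cons_mem_evenColumnPartitions.2 hl, rfl⟩
  · exact fun l _ l' _ h => Fin.cons_right_injective _ (Fin.cons_right_injective _ h)
  · intro l hl
    obtain ⟨hl, h0⟩ := mem_filter.1 hl
    have cons_cons_eq := cons_cons_tail_tail_of_mem_evenColumnPartitions hl h0
    rw [← cons_cons_eq] at hl
    exact ⟨_, cons_cons_mem_evenColumnPartitions.1 hl, cons_cons_eq⟩

end Partitions

section EvenColumnSum

variable {R K : Type*} [CommRing R] [Field K] {n : ℕ}

/-- The exponents `l_j + n - 1 - j` in the alternant whose quotient by the Vandermonde determinant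
is the Schur function of `l`. -/
def schurExponent (l : Fin n → ℕ) (j : Fin n) : ℕ :=
  l j + j.rev

theorem schurExponent_zero (l : Fin (n + 1) → ℕ) : schurExponent l 0 = l 0 + n := by
  simp [schurExponent]

theorem tail_schurExponent (l : Fin (n + 1) → ℕ) :
    Fin.tail (schurExponent l) = schurExponent (Fin.tail l) := by
  ext j
  simp [schurExponent, Fin.tail, Fin.rev_succ]

/-- The sum over the partitions in `evenColumnPartitions M n` of the numerators of their Schur
functions. -/
noncomputable def evenColumnSum (M : ℕ) (x : Fin n → R) : R :=
  ∑ l ∈ evenColumnPartitions M n, Matrix.det (.of fun i j => x i ^ schurExponent l j)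

theorem map_evenColumnSum {R' : Type*} [CommRing R'] (φ : R →+* R') (M : ℕ) (x : Fin n → R) :
    φ (evenColumnSum M x) = evenColumnSum M fun i => φ (x i) := by
  rw [evenColumnSum, evenColumnSum, map_sum]
  refine sum_congr rfl fun l _ => (RingHom.map_det _ _).trans (congrArg Matrix.det ?_)
  ext i j
  simp

/-- The sum obtained from `evenColumnSum` by normalising each alternant. -/
noncomputable def evenColumnNormSum (M : ℕ) (x : Fin n → K) : K :=
  ∑ l ∈ evenColumnPartitions M n, normAlternant (schurExponent l) x

theorem evenColumnSum_mul_pairProd_eq_normSum {x : Fin n → K} (hx : Function.Injective x) (M : ℕ) :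
    evenColumnSum M x * pairProd (fun i j => x i * x j - 1) =
      pairProd (fun i j => x i - x j) * evenColumnNormSum M x := by
  have pairProd_eq : pairProd (fun i j => x i * x j - 1) =
      pairProd (fun i j => x i - x j) * pairProd fun i j => pairKernel (x i) (x j) := by
    rw [← pairProd_mul]
    exact pairProd_congr fun i j hij => (mul_div_cancel₀ _ (sub_ne_zero.2 (hx.ne hij))).symm
  rw [pairProd_eq, mul_left_comm, evenColumnSum, sum_mul, evenColumnNormSum]
  rfl

theorem evenColumnNormSum_zero (x : Fin (n + 1) → K) : evenColumnNormSum 0 x = 0 := by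
  rw [evenColumnNormSum, evenColumnPartitions_zero_succ, sum_empty]

theorem evenColumnNormSum_succ_of_subsingleton [Subsingleton (Fin n)] (M : ℕ) (x : Fin n → K) :
    evenColumnNormSum (M + 1) x = 1 := by
  have matrix_eq : (.of fun i j => x i ^ schurExponent 0 j) = (1 : Matrix (Fin n) (Fin n) K) := by
    ext i j
    have rev_eq : j.rev = ⟨0, j.pos⟩ := Subsingleton.elim _ _
    rw [Matrix.of_apply, schurExponent, rev_eq, Pi.zero_apply, add_zero, pow_zero,
      Subsingleton.elim j i, Matrix.one_apply_eq]
  rw [evenColumnNormSum, evenColumnPartitions_succ_of_subsingleton, sum_singleton, normAlternant,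
    matrix_eq, Matrix.det_one, pairProd_of_subsingleton, one_mul]

theorem evenColumnNormSum_succ (M : ℕ) (x : Fin (n + 2) → K) :
    evenColumnNormSum (M + 1) x = evenColumnNormSum M x +
      altStep (M + n + 1) (altStep (M + n) (evenColumnNormSum (M + 1))) x := by
  have summand (l : Fin n → ℕ) :
      normAlternant (schurExponent (Fin.cons M (Fin.cons M l : Fin (n + 1) → ℕ))) x =
        altStep (M + n + 1) (altStep (M + n) (normAlternant (schurExponent l))) x := by
    rw [normAlternant_succ, schurExponent_zero, tail_schurExponent, Fin.cons_zero, Fin.tail_cons]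
    refine altStep_congr _ fun i => ?_
    rw [normAlternant_succ, schurExponent_zero, tail_schurExponent, Fin.cons_zero, Fin.tail_cons]
  simp only [evenColumnNormSum, sum_evenColumnPartitions_succ, summand]
  rw [← altStep_sum]
  congr! 2
  ext y
  exact (altStep_sum _ _ _ _).symm

theorem injective_removeNth {α : Type*} {x : Fin (n + 1) → α} (hx : Function.Injective x)
    (i : Fin (n + 1)) : Function.Injective (i.removeNth x) :=
  hx.comp Fin.succAbove_right_injective

theorem altStep_evenColumnNormSum (h2 : (2 : K) ≠ 0) {x : Fin (n + 1) → K}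
    (hx : Function.Injective x) (hx_sq : ∀ i, x i ^ 2 ≠ 1) (M : ℕ)
    (ih : ∀ i : Fin (n + 1),
      evenColumnNormSum (M + 1) (i.removeNth x) = paritySum 0 (M + n - 1) (i.removeNth x)) :
    altStep (M + n) (evenColumnNormSum (M + 1)) x = paritySum 1 (M + n) x := by
  rw [altStep_congr _ ih]
  rcases h : M + n with _ | N
  · obtain rfl : n = 0 := by omega
    simp [altStep, paritySum_zero_of_subsingleton, paritySum_one_fin_one]
  · exact altStep_paritySum_zero h2 hx hx_sq N

theorem evenColumnNormSum_add_two (h2 : (2 : K) ≠ 0)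
    (ih : ∀ (M : ℕ) (x : Fin n → K), Function.Injective x → (∀ i, x i ^ 2 ≠ 1) →
      evenColumnNormSum (M + 1) x = paritySum 0 (M + n - 1) x)
    (M : ℕ) {x : Fin (n + 2) → K} (hx : Function.Injective x) (hx_sq : ∀ i, x i ^ 2 ≠ 1) :
    evenColumnNormSum M x = paritySum 0 (M + n) x := by
  induction M with
  | zero => rw [evenColumnNormSum_zero, zero_add, paritySum_zero_eq_zero h2 hx]
  | succ M hM =>
    have inner (i : Fin (n + 2)) : altStep (M + n) (evenColumnNormSum (M + 1)) (i.removeNth x) =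
        paritySum 1 (M + n) (i.removeNth x) :=
      altStep_evenColumnNormSum h2 (injective_removeNth hx i) (fun _ => hx_sq _) M fun j =>
        ih M _ (injective_removeNth (injective_removeNth hx i) j) fun _ => hx_sq _
    rw [evenColumnNormSum_succ, hM, altStep_congr _ inner, altStep_paritySum_one h2 hx hx_sq,
      add_right_comm M 1 n, add_sub_cancel]

theorem evenColumnNormSum_succ_eq_paritySum (h2 : (2 : K) ≠ 0) (M : ℕ) {x : Fin n → K}
    (hx : Function.Injective x) (hx_sq : ∀ i, x i ^ 2 ≠ 1) :
    evenColumnNormSum (M + 1) x = paritySum 0 (M + n - 1) x := by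
  induction n using Nat.twoStepInduction generalizing M with
  | zero => rw [evenColumnNormSum_succ_of_subsingleton, paritySum_zero_of_subsingleton]
  | one => rw [evenColumnNormSum_succ_of_subsingleton, paritySum_zero_of_subsingleton]
  | more n ih _ =>
    rw [evenColumnNormSum_add_two h2 (fun M x hx hx_sq => ih M hx hx_sq) (M + 1) hx hx_sq]
    congr 1
    omega

theorem evenColumnSum_mul_pairProd_of_injective (h2 : (2 : K) ≠ 0) (m : ℕ) {x : Fin n → K}
    (hx : Function.Injective x) (hx_sq : ∀ i, x i ^ 2 ≠ 1) :
    evenColumnSum (m + 1) x * pairProd (fun i j => x i * x j - 1) =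
      evenDet (.of fun i j => x i ^ (j : ℕ)) (.of fun i j => x i ^ (m + n - 1 + (j.rev : ℕ))) := by
  rw [evenColumnSum_mul_pairProd_eq_normSum hx, evenColumnNormSum_succ_eq_paritySum h2 m hx hx_sq,
    evenDet_eq_mul_paritySum hx]

theorem evenColumnSum_mul_pairProd (m : ℕ) (x : Fin n → R) :
    evenColumnSum (m + 1) x * pairProd (fun i j => x i * x j - 1) =
      evenDet (.of fun i j => x i ^ (j : ℕ)) (.of fun i j => x i ^ (m + n - 1 + (j.rev : ℕ))) := by
  let P := MvPolynomial (Fin n) ℤ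
  let X (i : Fin n) : P := MvPolynomial.X i
  let ι : P →+* FractionRing P := algebraMap P (FractionRing P)
  have ι_injective : Function.Injective ι := IsFractionRing.injective P (FractionRing P)
  have X_sq_ne_one (i : Fin n) : X i ^ 2 ≠ 1 := fun h => by
    simpa [X] using congrArg (MvPolynomial.eval fun _ => (0 : ℤ)) h
  have generic : evenColumnSum (m + 1) X * pairProd (fun i j => X i * X j - 1) =
      evenDet (.of fun i j => X i ^ (j : ℕ)) (.of fun i j => X i ^ (m + n - 1 + (j.rev : ℕ))) := by
    apply ι_injective
    simp only [map_mul, map_evenColumnSum, map_pairProd, map_sub, map_one, map_evenDet, Matrix.map,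
      Matrix.of_apply, map_pow]
    refine evenColumnSum_mul_pairProd_of_injective two_ne_zero m
      (ι_injective.comp MvPolynomial.X_injective) fun i h => X_sq_ne_one i (ι_injective ?_)
    rw [map_pow, h, map_one]
  have h := congrArg (MvPolynomial.eval₂Hom (Int.castRingHom R) x) generic
  simpa only [map_mul, map_evenColumnSum, map_pairProd, map_sub, map_one, map_evenDet, Matrix.map,
    Matrix.of_apply, map_pow, X, MvPolynomial.coe_eval₂Hom, MvPolynomial.eval₂_X] using h

theorem sum_fin_eq_sum_evenColumnPartitions {A : Type*} [AddCommMonoid A] (M n : ℕ)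
    (F : (Fin n → ℕ) → A) :
    (∑ l : Fin n → Fin M with
      (∀ i j : Fin n, i ≤ j → (l j : ℕ) ≤ l i) ∧ ∀ c, 1 ≤ c → Even #{i | c ≤ (l i : ℕ)},
      F fun j => l j) = ∑ l ∈ evenColumnPartitions M n, F l := by
  refine sum_bij (fun l _ j => (l j : ℕ)) ?_ ?_ ?_ fun _ _ => rfl
  · intro l hl
    obtain ⟨anti, even_card⟩ := (mem_filter_univ l).1 hl
    exact mem_evenColumnPartitions.2 ⟨fun i => (l i).2, fun i j => anti i j, even_card⟩
  · exact fun l _ l' _ h => funext fun j => Fin.ext (congrFun h j)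
  · intro l hl
    obtain ⟨lt, anti, even_card⟩ := mem_evenColumnPartitions.1 hl
    exact ⟨fun j => ⟨l j, lt j⟩, (mem_filter_univ _).2 ⟨fun i j hij => anti hij, even_card⟩, rfl⟩

end EvenColumnSum

end Okada

open Okada in
theorem okada_identity_general (m n : ℕ) (R : Type*) [CommRing R] (x : Fin n → R) :
    (∑ l ∈ Finset.univ.filter
        (fun l : Fin n → Fin (m + 1) =>
          (∀ i j : Fin n, i ≤ j → (l j : ℕ) ≤ (l i : ℕ)) ∧
            ∀ c : ℕ, 1 ≤ c →
              Even (Finset.univ.filter (fun i : Fin n => c ≤ (l i : ℕ))).card),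
        Matrix.det (Matrix.of fun i j : Fin n => x i ^ ((l j : ℕ) + (n - 1 - (j : ℕ))))) *
      (∏ i : Fin n, ∏ j ∈ Finset.Ioi i, (x i * x j - 1)) =
    ∑ σ : Equiv.Perm (Fin n),
      ∑ S ∈ Finset.univ.filter (fun S : Finset (Fin n) => Even S.card),
        ((Equiv.Perm.sign σ : ℤ) : R) *
          ((∏ i ∈ S, x i ^ (m + 2 * n - 2 - (σ i : ℕ))) *
            ∏ i ∈ Sᶜ, x i ^ (σ i : ℕ)) := by
  have schur_exponent (l : Fin n → ℕ) (j : Fin n) : l j + (n - 1 - j) = schurExponent l j := by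
    rw [schurExponent, Fin.val_rev, Nat.sub_sub, add_comm 1]
  have exponent (j : Fin n) : m + 2 * n - 2 - j = m + n - 1 + (j.rev : ℕ) := by
    have := j.2
    rw [Fin.val_rev]
    omega
  have h := evenColumnSum_mul_pairProd m x
  rw [evenDet_eq_sum_perm, evenColumnSum, ← sum_fin_eq_sum_evenColumnPartitions (m + 1) n
    fun l => Matrix.det (.of fun i j => x i ^ schurExponent l j)] at h
  simpa only [pairProd, Matrix.of_apply, exponent, ← schur_exponent] using h

/-- **Okada's identity** (Theorem III), with denominators cleared.
Partitions `λ ⊆ {m^n}` whose conjugate is even (i.e. `#{i : λ_i ≥ c}` is even for all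
`c ≥ 1`) are encoded as antitone functions `Fin n → Fin (m+1)` with the corresponding
parity condition.  On the right, `σ(i)` and the elements of `{1,…,n}` are 0-indexed, so
`x_i^{m+2n-1-σ(i)}` becomes `x i ^ (m + 2*n - 2 - σ i)` and `x_i^{σ(i)-1}` becomes
`x i ^ (σ i)`; `(-1)^{inv σ}` is the sign of the permutation `σ`. -/
theorem okada_identity (m n : ℕ) (hm : 0 < m) (hn : 0 < n) (hneven : Even n)
    (R : Type*) [CommRing R] (x : Fin n → R) :
    (∑ l ∈ Finset.univ.filter
        (fun l : Fin n → Fin (m + 1) =>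
          (∀ i j : Fin n, i ≤ j → (l j : ℕ) ≤ (l i : ℕ)) ∧
            ∀ c : ℕ, 1 ≤ c →
              Even (Finset.univ.filter (fun i : Fin n => c ≤ (l i : ℕ))).card),
        Matrix.det (Matrix.of fun i j : Fin n => x i ^ ((l j : ℕ) + (n - 1 - (j : ℕ))))) *
      (∏ i : Fin n, ∏ j ∈ Finset.Ioi i, (x i * x j - 1)) =
    ∑ σ : Equiv.Perm (Fin n),
      ∑ S ∈ Finset.univ.filter (fun S : Finset (Fin n) => Even S.card),
        ((Equiv.Perm.sign σ : ℤ) : R) *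
          ((∏ i ∈ S, x i ^ (m + 2 * n - 2 - (σ i : ℕ))) *
            ∏ i ∈ Sᶜ, x i ^ (σ i : ℕ)) :=
  okada_identity_general m n R x
end

section
/- Let F be a field, n a positive integer, t, v ∈ F, and x_1, …, x_n nonzero pairwise distinct elements of F. Then x_1⋯x_n · ∑_{k=1}^n x_k^{−1} (1 − t x_k)(1 − v x_k) ∏_{i=1, i≠k}^n (1 − x_i x_k)/(x_i − x_k) equals (1 − t x_1⋯x_n)(1 − v x_1⋯x_n) if n is odd, and equals (1 − x_1⋯x_n)(1 − t v x_1⋯x_n) if n is even. -/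
/-!
Write `B_s(z) = ∏ i ∈ s, (1 - i z) / (i - z)` and `A_k = B_{s \ k}(k)`. The sum in question is a
combination of `∑ A_k / k`, `∑ A_k` and `∑ k A_k`. Adjoining a node `y` to `s` turns `∑ A_k` into
`B_s(y) + ∑ A_k (1 - y k) / (y - k)`. This does not depend on `y`: expanding `B_s(y)` into partial
fractions cancels every pole and leaves the value `∏ s - ∑ k A_k` at infinity. Taking `y = 1`, where
each `(1 - y k) / (y - k)` is `1` and `B_s` is `(-1) ^ #s`, shows by induction that `∑ A_k` is the
parity of `#s`. Taking `y = 0` and `y = ∞` then evaluates `∑ A_k / k` and `∑ k A_k`.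
-/

namespace Blaschke

open Finset Polynomial

lemma erase_insert_of_mem {α : Type*} [DecidableEq α] {s : Finset α} {a b : α} (ha : a ∉ s)
    (hb : b ∈ s) : (insert a s).erase b = insert a (s.erase b) :=
  erase_insert_of_ne (ne_of_mem_of_not_mem hb ha).symm

lemma neg_one_pow_add_ite_odd {R : Type*} [Ring R] (n : ℕ) :
    (-1 : R) ^ n + (if Odd n then 1 else 0) = if Odd (n + 1) then 1 else 0 := by
  rcases n.even_or_odd with hn | hn
  · simp [hn, hn.neg_one_pow, hn.add_one]
  · simp [hn, hn.neg_one_pow, hn.add_one]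

variable {F : Type*} [Field F]

/-- The algebraic analogue of a (reciprocal) Blaschke product: the rational function with poles at
the nodes `i ∈ s` and zeros at their inverses. The sign is chosen so that its value at `0` is
`(∏ i ∈ s, i)⁻¹`. -/
def blaschke (s : Finset F) (z : F) : F := ∏ i ∈ s, (1 - i * z) / (i - z)

lemma blaschke_zero (s : Finset F) : blaschke s 0 = (∏ i ∈ s, i)⁻¹ := by
  simp only [blaschke, mul_zero, sub_zero, one_div]
  exact prod_inv_distrib _

lemma blaschke_one {s : Finset F} (h1 : 1 ∉ s) : blaschke s 1 = (-1) ^ #s := by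
  refine prod_eq_pow_card fun i hi ↦ ?_
  have hi1 : i - 1 ≠ 0 := sub_ne_zero.2 (ne_of_mem_of_not_mem hi h1)
  rw [mul_one, ← neg_sub, neg_div, div_self hi1]

lemma blaschke_eq_prod_div_prod (s : Finset F) (z : F) :
    blaschke s z = (∏ i ∈ s, (i * z - 1)) / ∏ i ∈ s, (z - i) := by
  rw [← prod_div_distrib]
  exact prod_congr rfl fun i _ ↦ by rw [← neg_div_neg_eq, neg_sub, neg_sub]

lemma natDegree_C_mul_X_sub_one_le (a : F) : (C a * X - 1 : F[X]).natDegree ≤ 1 := by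
  compute_degree

lemma natDegree_prod_C_mul_X_sub_one_le (s : Finset F) :
    (∏ i ∈ s, (C i * X - 1)).natDegree ≤ #s := by
  refine (natDegree_prod_le _ _).trans ?_
  simpa using sum_le_card_nsmul s _ 1 fun i _ ↦ natDegree_C_mul_X_sub_one_le i

lemma coeff_card_prod_C_mul_X_sub_one (s : Finset F) :
    (∏ i ∈ s, (C i * X - 1)).coeff #s = ∏ i ∈ s, i := by
  rw [← mul_one #s, coeff_prod_of_natDegree_le _ _ _ fun i _ ↦ natDegree_C_mul_X_sub_one_le i]
  simp [coeff_one]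

variable [DecidableEq F] {s : Finset F} {y : F}

lemma blaschke_insert (hy : y ∉ s) (z : F) :
    blaschke (insert y s) z = (1 - y * z) / (y - z) * blaschke s z :=
  prod_insert hy

-- The leading coefficient of `∏ (i X - 1)` is read off its Lagrange interpolation at `insert y s`.
lemma blaschke_add_sum_eq_prod (hy : y ∉ s) :
    blaschke s y + ∑ k ∈ s, (1 - k ^ 2) / (y - k) * blaschke (s.erase k) k = ∏ i ∈ s, i := by
  have lagrange := Lagrange.coeff_eq_sum (s := insert y s) (v := id) (Set.injOn_id _)
    (P := ∏ i ∈ s, (C i * X - 1))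
    (by
      rw [card_insert_of_notMem hy]
      exact (degree_le_of_natDegree_le (natDegree_prod_C_mul_X_sub_one_le s)).trans_lt
        (by exact_mod_cast Nat.lt_succ_self #s))
  rw [card_insert_of_notMem hy, Nat.add_sub_cancel, coeff_card_prod_C_mul_X_sub_one] at lagrange
  rw [lagrange, sum_insert hy, erase_insert hy]
  simp only [eval_prod, eval_sub, eval_mul, eval_C, eval_X, eval_one, id]
  rw [← blaschke_eq_prod_div_prod]
  congr 1
  refine sum_congr rfl fun k hk ↦ ?_
  rw [erase_insert_of_mem hy hk, prod_insert fun h ↦ hy (mem_of_mem_erase h),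
    ← mul_prod_erase s _ hk, mul_div_mul_comm, ← blaschke_eq_prod_div_prod, ← neg_div_neg_eq,
    neg_sub, neg_sub, sq]

lemma sum_insert_blaschke_erase (hy : y ∉ s) :
    ∑ k ∈ insert y s, blaschke ((insert y s).erase k) k =
      blaschke s y + ∑ k ∈ s, (1 - y * k) / (y - k) * blaschke (s.erase k) k := by
  rw [sum_insert hy, erase_insert hy]
  congr 1
  refine sum_congr rfl fun k hk ↦ ?_
  rw [erase_insert_of_mem hy hk, blaschke_insert fun h ↦ hy (mem_of_mem_erase h)]

lemma sum_insert_blaschke_erase_eq_prod_sub_sum (hy : y ∉ s) :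
    ∑ k ∈ insert y s, blaschke ((insert y s).erase k) k =
      ∏ i ∈ s, i - ∑ k ∈ s, k * blaschke (s.erase k) k := by
  rw [sum_insert_blaschke_erase hy, ← blaschke_add_sum_eq_prod hy, add_sub_assoc, ← sum_sub_distrib]
  congr 1
  refine sum_congr rfl fun k hk ↦ ?_
  have hyk : y - k ≠ 0 := sub_ne_zero.2 (ne_of_mem_of_not_mem hk hy).symm
  field_simp
  ring

lemma sum_insert_one_blaschke_erase (h1 : 1 ∉ s) :
    ∑ k ∈ insert 1 s, blaschke ((insert 1 s).erase k) k =
      (-1) ^ #s + ∑ k ∈ s, blaschke (s.erase k) k := by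
  rw [sum_insert_blaschke_erase h1, blaschke_one h1]
  congr 1
  refine sum_congr rfl fun k hk ↦ ?_
  rw [one_mul, div_self (sub_ne_zero.2 (ne_of_mem_of_not_mem hk h1).symm), one_mul]

lemma sum_insert_blaschke_erase_eq_neg_one_pow_add_sum (h1 : 1 ∉ s) (hy : y ∉ s) :
    ∑ k ∈ insert y s, blaschke ((insert y s).erase k) k =
      (-1) ^ #s + ∑ k ∈ s, blaschke (s.erase k) k := by
  rw [← sum_insert_one_blaschke_erase h1, sum_insert_blaschke_erase_eq_prod_sub_sum h1,
    sum_insert_blaschke_erase_eq_prod_sub_sum hy]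

-- The nodes are adjoined with `1` last, since the recursion needs a set avoiding `1`.
theorem sum_blaschke_erase (s : Finset F) :
    ∑ k ∈ s, blaschke (s.erase k) k = if Odd #s then 1 else 0 := by
  have recursion {r : Finset F} {y : F} (h1 : 1 ∉ r) (hy : y ∉ r)
      (ih : ∑ k ∈ r, blaschke (r.erase k) k = if Odd #r then 1 else 0) :
      ∑ k ∈ insert y r, blaschke ((insert y r).erase k) k =
        if Odd #(insert y r) then 1 else 0 := by
    rw [sum_insert_blaschke_erase_eq_neg_one_pow_add_sum h1 hy, ih, neg_one_pow_add_ite_odd,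
      card_insert_of_notMem hy]
  have avoiding_one (r : Finset F) (h1 : 1 ∉ r) :
      ∑ k ∈ r, blaschke (r.erase k) k = if Odd #r then 1 else 0 := by
    induction r using Finset.induction_on with
    | empty => simp
    | insert y r hy ih =>
      have h1r : 1 ∉ r := fun h ↦ h1 (mem_insert_of_mem h)
      exact recursion h1r hy (ih h1r)
  by_cases h1 : 1 ∈ s
  · rw [← insert_erase h1]
    exact recursion (notMem_erase 1 s) (notMem_erase 1 s) (avoiding_one _ (notMem_erase 1 s))
  · exact avoiding_one s h1

lemma sum_mul_blaschke_erase (hy : y ∉ s) :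
    ∑ k ∈ s, k * blaschke (s.erase k) k = ∏ i ∈ s, i - if Even #s then 1 else 0 := by
  have h := sum_insert_blaschke_erase_eq_prod_sub_sum hy
  rw [sum_blaschke_erase, card_insert_of_notMem hy] at h
  simp only [Nat.odd_add_one, Nat.not_odd_iff_even] at h
  rw [h, sub_sub_cancel]

lemma sum_inv_mul_blaschke_erase (h0 : 0 ∉ s) :
    ∑ k ∈ s, k⁻¹ * blaschke (s.erase k) k = (∏ i ∈ s, i)⁻¹ - if Even #s then 1 else 0 := by
  have h := sum_insert_blaschke_erase h0
  rw [sum_blaschke_erase, card_insert_of_notMem h0, blaschke_zero] at h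
  simp only [Nat.odd_add_one, Nat.not_odd_iff_even, zero_mul, sub_zero, zero_sub, one_div, inv_neg,
    neg_mul, sum_neg_distrib] at h
  rw [h, sub_add_cancel_left, neg_neg]

lemma sum_inv_mul_quadratic_mul_blaschke_erase (h0 : 0 ∉ s) (t v : F) :
    ∑ k ∈ s, k⁻¹ * (1 - t * k) * (1 - v * k) * blaschke (s.erase k) k =
      ∑ k ∈ s, k⁻¹ * blaschke (s.erase k) k - (t + v) * ∑ k ∈ s, blaschke (s.erase k) k +
        t * v * ∑ k ∈ s, k * blaschke (s.erase k) k := by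
  rw [mul_sum, mul_sum, ← sum_sub_distrib, ← sum_add_distrib]
  refine sum_congr rfl fun k hk ↦ ?_
  have hk0 : k ≠ 0 := ne_of_mem_of_not_mem hk h0
  field_simp
  ring

theorem prod_mul_sum_inv_mul_quadratic_mul_blaschke_erase (h0 : 0 ∉ s) (t v : F) :
    (∏ i ∈ s, i) * ∑ k ∈ s, k⁻¹ * (1 - t * k) * (1 - v * k) * blaschke (s.erase k) k =
      if Odd #s then (1 - t * ∏ i ∈ s, i) * (1 - v * ∏ i ∈ s, i)
      else (1 - ∏ i ∈ s, i) * (1 - t * v * ∏ i ∈ s, i) := by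
  have hprod : ∏ i ∈ s, i ≠ 0 := prod_ne_zero_iff.2 fun i hi ↦ ne_of_mem_of_not_mem hi h0
  rw [sum_inv_mul_quadratic_mul_blaschke_erase h0, sum_blaschke_erase, sum_mul_blaschke_erase h0,
    sum_inv_mul_blaschke_erase h0]
  by_cases hs : Odd #s
  · rw [if_pos hs, if_pos hs, if_neg (Nat.not_even_iff_odd.2 hs)]
    field_simp
    ring
  · rw [if_neg hs, if_neg hs, if_pos (Nat.not_odd_iff_even.1 hs)]
    field_simp
    ring

lemma blaschke_erase_map {ι : Type*} [DecidableEq ι] (x : ι ↪ F) (s : Finset ι) (k : ι) :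
    blaschke ((s.map x).erase (x k)) (x k) =
      ∏ i ∈ s.erase k, (1 - x i * x k) / (x i - x k) := by
  rw [← map_erase, blaschke, prod_map]

end Blaschke

/-- **Lemma 1** of the paper.  For nonzero pairwise distinct `x 1, …, x n` in a field `F`
and arbitrary `t, v ∈ F`,
`x_1⋯x_n ∑_k x_k⁻¹ (1-t x_k)(1-v x_k) ∏_{i≠k} (1-x_i x_k)/(x_i-x_k)` equals
`(1-t x_1⋯x_n)(1-v x_1⋯x_n)` for `n` odd and `(1-x_1⋯x_n)(1-t v x_1⋯x_n)` for `n` even. -/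
theorem lemma_one (F : Type*) [Field F] (n : ℕ) (hn : 0 < n) (t v : F)
    (x : Fin n → F) (hx0 : ∀ i, x i ≠ 0) (hxinj : Function.Injective x) :
    (∏ i : Fin n, x i) *
      ∑ k : Fin n, (x k)⁻¹ * (1 - t * x k) * (1 - v * x k) *
        ∏ i ∈ Finset.univ.erase k, (1 - x i * x k) / (x i - x k) =
    if Odd n then (1 - t * ∏ i : Fin n, x i) * (1 - v * ∏ i : Fin n, x i)
    else (1 - ∏ i : Fin n, x i) * (1 - t * v * ∏ i : Fin n, x i) := by
  classical
  have h := Blaschke.prod_mul_sum_inv_mul_quadratic_mul_blaschke_erase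
    (s := Finset.univ.map ⟨x, hxinj⟩) (by simp [hx0]) t v
  have hweight := Blaschke.blaschke_erase_map ⟨x, hxinj⟩ Finset.univ
  simp only [Function.Embedding.coeFn_mk] at hweight
  simpa only [Finset.sum_map, Finset.prod_map, Function.Embedding.coeFn_mk, hweight,
    Finset.card_map, Finset.card_univ, Fintype.card_fin] using h
end

section
/- For every positive integer n, the following identity holds in the formal power series ring ℚ[[x_1, …, x_n]]: ∑_{λ, all λ_j even} det((x_i^{λ_j + n − j})_{1≤i,j≤n}) · ∏_{i=1}^n (1 − x_i^2) · ∏_{1 ≤ i < j ≤ n} (1 − x_i x_j) = ∏_{1 ≤ i < j ≤ n} (x_i − x_j), where the sum is over all partitions λ = (λ_1 ≥ ⋯ ≥ λ_n ≥ 0) with at most n parts, all of which are even (the family is summable, since for each monomial only finitely many λ contribute). Equivalently (Littlewood): ∑_{λ even} s_λ(x_1,…,x_n) = ∏_i 1/(1 − x_i^2) · ∏_{i<j} 1/(1 − x_i x_j). -/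
/-!
Write `a_α = det (x_i ^ α_j)`, `δ = (n - 1, …, 1, 0)` and `e = x_1 ⋯ x_n`, and argue by induction on
`n`. Subtracting the last part `2m` of an even partition from all its parts factors `e ^ (2m)` out
of `a_{λ+δ}` and leaves a zero exponent in the last column. By expansion along that column and the
induction hypothesis for the variables other than `x_r`, the partitions with last part `2m`,
multiplied by the denominator, contribute `e ^ (2m)` times
`∑_r ± (∏_k (1 - x_r x_k)) (∏_{i ≠ r} x_i) a_δ(x without x_r)`.
This is the expansion of a determinant with one column of values at the `x_r` of the polynomial
`∏_k (1 - t x_k)` and columns of exponents `n - 1, …, 1`. Only the coefficients of `t ^ 0` and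
`t ^ n` contribute, and they give `(1 - e ^ 2) a_δ`; the geometric series in `e ^ 2` cancels the
factor `1 - e ^ 2`.
-/

open Finset

section Snoc

variable {α : Type*} {n : ℕ}

theorem antitone_snoc [Preorder α] {l : Fin n → α} (hl : Antitone l) {a : α}
    (ha : ∀ i, a ≤ l i) : Antitone (Fin.snoc l a : Fin (n + 1) → α) := by
  intro i j hij
  cases j using Fin.lastCases with
  | last => cases i using Fin.lastCases <;> simp [ha]
  | cast j =>
    cases i using Fin.lastCases with
    | last => exact absurd hij (Fin.castSucc_lt_last j).not_ge
    | cast i => simpa using hl (Fin.castSucc_le_castSucc_iff.mp hij)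

theorem forall_snoc {p : α → Prop} {l : Fin n → α} (hl : ∀ i, p (l i)) {a : α}
    (ha : p a) (i : Fin (n + 1)) : p ((Fin.snoc l a : Fin (n + 1) → α) i) := by
  cases i using Fin.lastCases <;> simp [hl, ha]

end Snoc

section SymmetricPairs

variable {M : Type*} [CommMonoid M]

theorem prod_sym2_univ_succAbove {n : ℕ} (f : Sym2 (Fin (n + 1)) → M) (r : Fin (n + 1)) :
    ∏ z, f z = (∏ i, f s(r, i)) * ∏ z : Sym2 (Fin n), f (z.map r.succAbove) := by
  rw [← sym2_univ, Fin.univ_succAbove n r, sym2_cons, prod_disjUnion, sym2_map, prod_map, prod_map,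
    sym2_univ]
  rfl

theorem prod_sym2_univ_eq_prod_diag_mul_prod_Ioi {n : ℕ} (f : Sym2 (Fin n) → M) :
    ∏ z, f z = (∏ i, f s(i, i)) * ∏ i, ∏ j ∈ Ioi i, f s(i, j) := by
  induction n with
  | zero => simp
  | succ n ih =>
    rw [prod_sym2_univ_succAbove f 0, ih, Fin.prod_univ_succ fun i => f s(0, i),
      Fin.prod_univ_succ fun i => f s(i, i),
      Fin.prod_univ_succ fun i => ∏ j ∈ Ioi i, f s(i, j), Fin.prod_Ioi_zero]
    simp only [Fin.prod_Ioi_succ, Sym2.map_mk, Fin.zero_succAbove]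
    exact mul_mul_mul_comm ..

end SymmetricPairs

section Polynomial

open Polynomial

variable {R ι : Type*} [CommRing R] [Fintype ι]

theorem natDegree_one_sub_C_mul_X_le (c : R) : (1 - C c * X).natDegree ≤ 1 := by
  compute_degree

theorem natDegree_prod_one_sub_C_mul_X_le (x : ι → R) :
    (∏ i, (1 - C (x i) * X)).natDegree ≤ Fintype.card ι := by
  refine (natDegree_prod_le _ _).trans ?_
  simpa using sum_le_card_nsmul univ _ 1 fun i _ => natDegree_one_sub_C_mul_X_le (x i)

theorem coeff_zero_prod_one_sub_C_mul_X (x : ι → R) :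
    (∏ i, (1 - C (x i) * X)).coeff 0 = 1 := by
  simp [coeff_zero_prod]

theorem coeff_card_prod_one_sub_C_mul_X (x : ι → R) :
    (∏ i, (1 - C (x i) * X)).coeff (Fintype.card ι) = (-1) ^ Fintype.card ι * ∏ i, x i := by
  have h := coeff_prod_of_natDegree_le univ _ 1 fun i _ => natDegree_one_sub_C_mul_X_le (x i)
  rw [card_univ, mul_one] at h
  simp [h, coeff_one, prod_neg]

end Polynomial

section TopologicallyNilpotent

theorem isTopologicallyNilpotent_mul {R : Type*} [CommMonoidWithZero R] [TopologicalSpace R]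
    [ContinuousMul R] {y z : R} (hy : IsTopologicallyNilpotent y)
    (hz : IsTopologicallyNilpotent z) : IsTopologicallyNilpotent (y * z) := by
  simpa [IsTopologicallyNilpotent, mul_pow] using Filter.Tendsto.mul hy hz

theorem isTopologicallyNilpotent_prod {R ι : Type*} [CommMonoidWithZero R] [TopologicalSpace R]
    [ContinuousMul R] {s : Finset ι} (hs : s.Nonempty) {x : ι → R}
    (hx : ∀ i ∈ s, IsTopologicallyNilpotent (x i)) :
    IsTopologicallyNilpotent (∏ i ∈ s, x i) :=
  prod_induction_nonempty x IsTopologicallyNilpotent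
    (fun _ _ => isTopologicallyNilpotent_mul) hs hx

theorem summable_pow_of_isTopologicallyNilpotent {R : Type*} [Ring R] [UniformSpace R]
    [IsUniformAddGroup R] [CompleteSpace R] [NonarchimedeanRing R] {y : R}
    (hy : IsTopologicallyNilpotent y) : Summable (y ^ · : ℕ → R) :=
  NonarchimedeanAddGroup.summable_of_tendsto_cofinite_zero <| by
    rwa [Nat.cofinite_eq_atTop]

theorem hasSum_pow_mul_of_hasSum_one_sub_mul {R ι : Type*} [CommRing R] [UniformSpace R]
    [IsUniformAddGroup R] [CompleteSpace R] [T2Space R] [NonarchimedeanRing R] {y a : R}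
    (hy : IsTopologicallyNilpotent y) {f : ι → R} (hf : HasSum f ((1 - y) * a)) :
    HasSum (fun p : ℕ × ι => y ^ p.1 * f p.2) a := by
  have hgeom := summable_pow_of_isTopologicallyNilpotent hy
  have h := hgeom.hasSum.mul_of_nonarchimedean hf
  rwa [← mul_assoc, hgeom.tsum_pow_mul_one_sub, one_mul] at h

theorem nonarchimedeanRing_of_isLinearTopology (R : Type*) [Ring R] [TopologicalSpace R]
    [IsTopologicalRing R] [IsLinearTopology R R] : NonarchimedeanRing R where
  is_nonarchimedean U hU := by
    obtain ⟨J, hJ, hJU⟩ := (IsLinearTopology.hasBasis_open_ideal (R := R)).mem_iff.mp hU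
    exact ⟨⟨J.toAddSubgroup, hJ⟩, hJU⟩

end TopologicallyNilpotent

section Alternant

variable {R : Type*} [CommRing R] {n : ℕ}

/-- The alternant `a_α(x) = det (x_i ^ α_j)` of the theory of symmetric functions. The exponents
are arbitrary: the numerator of the Schur function `s_λ` is `alternant x (λ + staircase n)`. -/
def alternant (x : Fin n → R) (a : Fin n → ℕ) : R :=
  Matrix.det (Matrix.of fun i j => x i ^ a j)

/-- The exponent vector `δ = (n - 1, …, 1, 0)` of the Vandermonde determinant. -/
def staircase (n : ℕ) : Fin n → ℕ := fun j => n - 1 - (j : ℕ)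

theorem staircase_succ_eq_snoc (n : ℕ) :
    staircase (n + 1) = Fin.snoc (fun j => staircase n j + 1 : Fin n → ℕ) 0 := by
  ext j
  cases j using Fin.lastCases with
  | last => simp [staircase]
  | cast j =>
    simp only [staircase, Fin.snoc_castSucc, Fin.val_castSucc]
    omega

theorem cons_staircase_add_one (n : ℕ) :
    (Fin.cons (n + 1) fun j => staircase n j + 1 : Fin (n + 1) → ℕ) =
      fun j => staircase (n + 1) j + 1 := by
  ext j
  cases j using Fin.cases with
  | zero => simp [staircase]
  | succ j =>
    simp only [staircase, Fin.cons_succ, Fin.val_succ]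
    omega

theorem alternant_staircase (x : Fin n → R) :
    alternant x (staircase n) = ∏ i, ∏ j ∈ Ioi i, (x i - x j) := by
  have h := Matrix.det_projVandermonde (fun _ => 1) x
  simp only [one_mul] at h
  rw [← h, alternant]
  congr 1
  ext i j
  simp [Matrix.projVandermonde_apply, staircase, Nat.sub_sub, Nat.add_comm]

theorem alternant_add_const (x : Fin n → R) (a : Fin n → ℕ) (m : ℕ) :
    alternant x (fun j => a j + m) = (∏ i, x i) ^ m * alternant x a := by
  simp only [alternant, ← prod_pow, ← Matrix.det_mul_column, Matrix.of_apply, pow_add, mul_comm]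

theorem alternant_eq_zero_of_eq (x : Fin n → R) {a : Fin n → ℕ} {i j : Fin n} (hij : i ≠ j)
    (h : a i = a j) : alternant x a = 0 :=
  Matrix.det_zero_of_column_eq hij fun k => by simp [h]

theorem alternant_snoc_eq_neg_one_pow_mul_cons (x : Fin (n + 1) → R) (a : Fin n → ℕ) (k : ℕ) :
    alternant x (Fin.snoc a k : Fin (n + 1) → ℕ) =
      (-1) ^ n * alternant x (Fin.cons k a : Fin (n + 1) → ℕ) := by
  have h := Matrix.det_permute' (finRotate (n + 1))
    (Matrix.of fun i j => x i ^ (Fin.cons k a : Fin (n + 1) → ℕ) j)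
  rw [sign_finRotate] at h
  rw [Fin.snoc_eq_cons_rotate]
  simpa [alternant, Matrix.submatrix] using h

theorem alternant_cons_eq_sum (x : Fin (n + 1) → R) (a : Fin n → ℕ) (k : ℕ) :
    alternant x (Fin.cons k a : Fin (n + 1) → ℕ) =
      ∑ r : Fin (n + 1), (-1) ^ (r : ℕ) * x r ^ k * alternant (x ∘ r.succAbove) a := by
  simp [alternant, Matrix.det_succ_column_zero, Matrix.submatrix]

theorem sum_eval_mul_alternant_succAbove (x : Fin (n + 1) → R) (a : Fin n → ℕ) (p : Polynomial R)
    {N : ℕ} (hp : p.natDegree < N) :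
    ∑ r : Fin (n + 1), (-1) ^ (r : ℕ) * p.eval (x r) * alternant (x ∘ r.succAbove) a =
      ∑ k ∈ range N, p.coeff k * alternant x (Fin.cons k a : Fin (n + 1) → ℕ) := by
  simp only [Polynomial.eval_eq_sum_range' hp, alternant_cons_eq_sum, mul_sum, sum_mul]
  rw [sum_comm]
  exact sum_congr rfl fun k _ => sum_congr rfl fun r _ => by ring

theorem alternant_cons_zero_staircase (x : Fin (n + 1) → R) :
    alternant x (Fin.cons 0 fun j => staircase n j + 1 : Fin (n + 1) → ℕ) =
      (-1) ^ n * alternant x (staircase (n + 1)) := by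
  rw [staircase_succ_eq_snoc, alternant_snoc_eq_neg_one_pow_mul_cons, ← mul_assoc, ← mul_pow]
  simp

theorem alternant_cons_succ_staircase_eq_zero (x : Fin (n + 1) → R) {k : ℕ} (hk : k < n) :
    alternant x (Fin.cons (k + 1) fun j => staircase n j + 1 : Fin (n + 1) → ℕ) = 0 := by
  refine alternant_eq_zero_of_eq x (Fin.succ_ne_zero ⟨n - 1 - k, by omega⟩).symm ?_
  simp only [staircase, Fin.cons_zero, Fin.cons_succ]
  omega

theorem alternant_cons_top_staircase (x : Fin (n + 1) → R) :
    alternant x (Fin.cons (n + 1) fun j => staircase n j + 1 : Fin (n + 1) → ℕ) =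
      (∏ i, x i) * alternant x (staircase (n + 1)) := by
  rw [cons_staircase_add_one, alternant_add_const, pow_one]

theorem sum_eval_mul_alternant_staircase_succAbove (x : Fin (n + 1) → R) {p : Polynomial R}
    (hp : p.natDegree ≤ n + 1) :
    ∑ r : Fin (n + 1), (-1) ^ (r : ℕ) * p.eval (x r) *
        alternant (x ∘ r.succAbove) (fun j => staircase n j + 1) =
      ((-1) ^ n * p.coeff 0 + p.coeff (n + 1) * ∏ i, x i) * alternant x (staircase (n + 1)) := by
  have hmiddle : ∑ k ∈ range n, p.coeff (k + 1) *
      alternant x (Fin.cons (k + 1) fun j => staircase n j + 1 : Fin (n + 1) → ℕ) = 0 :=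
    sum_eq_zero fun k hk => by
      rw [alternant_cons_succ_staircase_eq_zero x (mem_range.mp hk), mul_zero]
  rw [sum_eval_mul_alternant_succAbove x _ p (Nat.lt_succ_of_le hp), sum_range_succ,
    sum_range_succ', hmiddle, alternant_cons_zero_staircase, alternant_cons_top_staircase]
  ring

theorem sum_prod_one_sub_mul_alternant_staircase_succAbove (x : Fin (n + 1) → R) :
    (-1) ^ n * ∑ r : Fin (n + 1), (-1) ^ (r : ℕ) * (∏ k, (1 - x r * x k)) *
        alternant (x ∘ r.succAbove) (fun j => staircase n j + 1) =
      (1 - (∏ k, x k) ^ 2) * alternant x (staircase (n + 1)) := by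
  have hdeg := natDegree_prod_one_sub_C_mul_X_le x
  have htop := coeff_card_prod_one_sub_C_mul_X x
  rw [Fintype.card_fin] at hdeg htop
  have hsum := sum_eval_mul_alternant_staircase_succAbove x hdeg
  rw [coeff_zero_prod_one_sub_C_mul_X, htop] at hsum
  simp only [Polynomial.eval_prod, Polynomial.eval_sub, Polynomial.eval_one, Polynomial.eval_mul,
    Polynomial.eval_C, Polynomial.eval_X, mul_comm (x _) (x _)] at hsum ⊢
  have hsign : (-1 : R) ^ n * (-1) ^ n = 1 := by rw [← mul_pow]; simp
  rw [hsum]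
  linear_combination (1 - (∏ k, x k) ^ 2) * alternant x (staircase (n + 1)) * hsign

end Alternant

section LittlewoodDenom

variable {R : Type*} [CommRing R] {n : ℕ}

/-- The denominator `∏_{i ≤ j} (1 - x_i x_j)` of Littlewood's formula, as a product over
unordered pairs, so that no variable plays a special role. -/
def littlewoodDenom (x : Fin n → R) : R :=
  ∏ z : Sym2 (Fin n), (1 - (z.map x).mul)

theorem littlewoodDenom_eq_prod_mul_prod_Ioi (x : Fin n → R) :
    littlewoodDenom x = (∏ i, (1 - x i ^ 2)) * ∏ i, ∏ j ∈ Ioi i, (1 - x i * x j) := by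
  simp [littlewoodDenom, prod_sym2_univ_eq_prod_diag_mul_prod_Ioi, sq]

theorem littlewoodDenom_eq_prod_mul_succAbove (x : Fin (n + 1) → R) (r : Fin (n + 1)) :
    littlewoodDenom x = (∏ i, (1 - x r * x i)) * littlewoodDenom (x ∘ r.succAbove) := by
  simp [littlewoodDenom, prod_sym2_univ_succAbove _ r, Sym2.map_map]

theorem alternant_snoc_zero_mul_littlewoodDenom (x : Fin (n + 1) → R) (a : Fin n → ℕ) :
    alternant x (Fin.snoc (fun j => a j + 1 : Fin n → ℕ) 0 : Fin (n + 1) → ℕ) *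
        littlewoodDenom x =
      (-1) ^ n * ∑ r : Fin (n + 1), (-1) ^ (r : ℕ) * (∏ k, (1 - x r * x k)) *
        ((∏ i, x (r.succAbove i)) *
          (alternant (x ∘ r.succAbove) a * littlewoodDenom (x ∘ r.succAbove))) := by
  rw [alternant_snoc_eq_neg_one_pow_mul_cons, alternant_cons_eq_sum, mul_assoc, sum_mul]
  congr 1
  refine sum_congr rfl fun r _ => ?_
  rw [alternant_add_const, littlewoodDenom_eq_prod_mul_succAbove x r]
  simp only [Function.comp_apply]
  ring

theorem hasSum_alternant_snoc_zero_mul_littlewoodDenom [TopologicalSpace R] [IsTopologicalRing R]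
    {ι : Type*} {a : ι → Fin n → ℕ} (x : Fin (n + 1) → R)
    (h : ∀ r : Fin (n + 1),
      HasSum (fun l => alternant (x ∘ r.succAbove) (a l) * littlewoodDenom (x ∘ r.succAbove))
        (alternant (x ∘ r.succAbove) (staircase n))) :
    HasSum (fun l => alternant x (Fin.snoc (fun j => a l j + 1 : Fin n → ℕ) 0 : Fin (n + 1) → ℕ) *
        littlewoodDenom x)
      ((1 - (∏ k, x k) ^ 2) * alternant x (staircase (n + 1))) := by
  simp only [alternant_snoc_zero_mul_littlewoodDenom,
    ← sum_prod_one_sub_mul_alternant_staircase_succAbove, alternant_add_const, pow_one]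
  exact (hasSum_sum fun r _ => ((h r).mul_left _).mul_left _).mul_left _

end LittlewoodDenom

section EvenPartition

/-- Partitions with at most `n` parts, all of them even, as weakly decreasing exponent vectors. -/
abbrev EvenPartition (n : ℕ) : Type :=
  {l : Fin n → ℕ // Antitone l ∧ ∀ j, Even (l j)}

variable {n : ℕ}

/-- An even partition with at most `n + 1` parts is determined by half of its last part and the
differences of the other parts with the last one. -/
def evenPartitionSuccEquiv (n : ℕ) : ℕ × EvenPartition n ≃ EvenPartition (n + 1) where
  toFun p := ⟨Fin.snoc (fun j => p.2.1 j + 2 * p.1) (2 * p.1),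
    antitone_snoc (p.2.2.1.add_const _) fun _ => Nat.le_add_left _ _,
    forall_snoc (fun j => (p.2.2.2 j).add (even_two_mul _)) (even_two_mul _)⟩
  invFun l := (l.1 (Fin.last n) / 2, ⟨fun j => l.1 j.castSucc - l.1 (Fin.last n),
    fun _ _ h => Nat.sub_le_sub_right (l.2.1 (Fin.castSucc_le_castSucc_iff.mpr h)) _,
    fun _ => (l.2.2 _).tsub (l.2.2 _)⟩)
  left_inv p := by simp
  right_inv l := by
    have hlast : 2 * (l.1 (Fin.last n) / 2) = l.1 (Fin.last n) :=
      Nat.two_mul_div_two_of_even (l.2.2 _)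
    ext j
    cases j using Fin.lastCases with
    | last => simpa using hlast
    | cast j => simpa [hlast] using Nat.sub_add_cancel (l.2.1 (Fin.le_last _))

theorem evenPartitionSuccEquiv_add_staircase (m : ℕ) (l : EvenPartition n) :
    (evenPartitionSuccEquiv n (m, l)).1 + staircase (n + 1) =
      fun j => (Fin.snoc (fun i => (l.1 + staircase n) i + 1 : Fin n → ℕ) 0 : Fin (n + 1) → ℕ) j +
        2 * m := by
  ext j
  cases j using Fin.lastCases with
  | last => simp [evenPartitionSuccEquiv, staircase_succ_eq_snoc]
  | cast j =>
    simp only [evenPartitionSuccEquiv, staircase_succ_eq_snoc, Equiv.coe_fn_mk, Pi.add_apply,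
      Fin.snoc_castSucc]
    ring

end EvenPartition

section Littlewood

variable {R : Type*} [CommRing R] [UniformSpace R] [IsUniformAddGroup R] [CompleteSpace R]
  [T2Space R] [NonarchimedeanRing R] {n : ℕ}

theorem hasSum_alternant_mul_littlewoodDenom (x : Fin n → R)
    (hx : ∀ i, IsTopologicallyNilpotent (x i)) :
    HasSum (fun l : EvenPartition n => alternant x (l.1 + staircase n) * littlewoodDenom x)
      (alternant x (staircase n)) := by
  induction n with
  | zero =>
    have : Unique (EvenPartition 0) := ⟨⟨⟨0, antitone_const, finZeroElim⟩⟩,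
      fun _ => Subsingleton.elim _ _⟩
    simp [alternant, littlewoodDenom, hasSum_unique]
  | succ n ih =>
    have hprod : IsTopologicallyNilpotent (∏ k, x k) :=
      isTopologicallyNilpotent_prod univ_nonempty fun i _ => hx i
    have hsq : IsTopologicallyNilpotent ((∏ k, x k) ^ 2) := by
      simpa only [sq] using isTopologicallyNilpotent_mul hprod hprod
    have hlast := hasSum_alternant_snoc_zero_mul_littlewoodDenom x
      fun r => ih (x ∘ r.succAbove) fun i => hx _
    rw [← (evenPartitionSuccEquiv n).hasSum_iff]
    refine (hasSum_pow_mul_of_hasSum_one_sub_mul hsq hlast).congr_fun fun p => ?_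
    rw [Function.comp_apply, evenPartitionSuccEquiv_add_staircase, alternant_add_const, pow_mul,
      mul_assoc]

theorem littlewood_sum_even_partitions_general (x : Fin n → R)
    (hx : ∀ i, IsTopologicallyNilpotent (x i)) :
    HasSum
      (fun l : EvenPartition n =>
        Matrix.det (Matrix.of fun i j : Fin n => x i ^ (l.1 j + (n - 1 - (j : ℕ)))) *
          (∏ i, (1 - x i ^ 2)) * ∏ i, ∏ j ∈ Ioi i, (1 - x i * x j))
      (∏ i, ∏ j ∈ Ioi i, (x i - x j)) := by
  have h := hasSum_alternant_mul_littlewoodDenom x hx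
  simp only [alternant_staircase, littlewoodDenom_eq_prod_mul_prod_Ioi, ← mul_assoc] at h
  exact h

end Littlewood

open MvPowerSeries.WithPiTopology

/-- **Littlewood's formula** `∑_{λ even} s_λ = ∏ 1/(1-x_i²) ∏_{i<j} 1/(1-x_i x_j)` with
denominators cleared, as a convergent sum in `ℚ[[x_1,…,x_n]]` (with the product topology
coming from the discrete topology on the coefficients).  Partitions with at most `n`
parts, all even, are encoded as antitone functions `Fin n → ℕ` with even values; with
0-indexed `j`, the exponent `λ_j + n - j` becomes `l j + (n - 1 - j)`. -/
theorem littlewood_sum_even_partitions (n : ℕ) (hn : 0 < n) :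
    letI : TopologicalSpace ℚ := ⊥
    letI : TopologicalSpace (MvPowerSeries (Fin n) ℚ) :=
      inferInstanceAs (TopologicalSpace ((Fin n →₀ ℕ) → ℚ))
    HasSum
      (fun l : {l : Fin n → ℕ //
          (∀ i j : Fin n, i ≤ j → l j ≤ l i) ∧ ∀ j : Fin n, Even (l j)} =>
        Matrix.det (Matrix.of fun i j : Fin n =>
            (MvPowerSeries.X i : MvPowerSeries (Fin n) ℚ) ^ (l.1 j + (n - 1 - (j : ℕ)))) *
          (∏ i : Fin n, (1 - MvPowerSeries.X i ^ 2)) *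
          ∏ i : Fin n, ∏ j ∈ Finset.Ioi i,
            (1 - MvPowerSeries.X i * MvPowerSeries.X j))
      (∏ i : Fin n, ∏ j ∈ Finset.Ioi i,
        (MvPowerSeries.X i - MvPowerSeries.X j)) := by
  let _ : UniformSpace ℚ := ⊥
  have := nonarchimedeanRing_of_isLinearTopology (MvPowerSeries (Fin n) ℚ)
  exact littlewood_sum_even_partitions_general MvPowerSeries.X fun i =>
    isTopologicallyNilpotent_of_constantCoeff_zero (MvPowerSeries.constantCoeff_X i)
end
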